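/- Let N ≥ 2, 1 < p ≤ N, p − 1 < q < q_c, and let a, c₀ > 0. Let φ : (0,1] → (0,∞) be continuous and nonincreasing with φ(r) ≤ a · φ(2r) for all 0 < r ≤ 1/2 and r^{β_q} φ(r) ≤ c₀ for all 0 < r ≤ 1. Then there exist C > 0 and α ∈ (0,1), depending only on N, p, q, a, c₀, such that every strong solution u of (E) on B_1(0) ∖ {0} satisfying |u(x)| ≤ φ(|x|) for all 0 < |x| < 1 obeys: |∇u(x)| ≤ C φ(|x|) |x|^{−1} for all 0 < |x| ≤ 1/2, and |∇u(x) − ∇u(x′)| ≤ C φ(|x|) |x|^{−1−α} |x − x′|^{α} whenever 0 < |x| ≤ |x′| ≤ 1/2. -/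

import Mathlib

open Metric Set Filter Topology MeasureTheory

/-- The vector field `x ↦ |∇u(x)|^{p-2} ∇u(x)`. -/
noncomputable def pGradField {N : ℕ} (p : ℝ) (u : EuclideanSpace ℝ (Fin N) → ℝ)
    (x : EuclideanSpace ℝ (Fin N)) : EuclideanSpace ℝ (Fin N) :=
  ‖gradient u x‖ ^ (p - 2) • gradient u x

/-- A strong solution of `(E) : -Δ_p u + |∇u|^q = 0` on an open set `G ⊆ ℝ^N`. -/
def IsStrongSolution {N : ℕ} (p q : ℝ) (G : Set (EuclideanSpace ℝ (Fin N)))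
    (u : EuclideanSpace ℝ (Fin N) → ℝ) : Prop :=
  ContDiffOn ℝ 1 u G ∧
  ContDiffOn ℝ 3 u {x | x ∈ G ∧ gradient u x ≠ 0} ∧
  ∀ x ∈ G, DifferentiableAt ℝ (pGradField p u) x ∧
    LinearMap.trace ℝ (EuclideanSpace ℝ (Fin N))
      (fderiv ℝ (pGradField p u) x : EuclideanSpace ℝ (Fin N) →ₗ[ℝ] EuclideanSpace ℝ (Fin N))
      = ‖gradient u x‖ ^ q

open scoped RealInnerProductSpace

/-- `f` has the second order expansion `f s = f 0 + a s + (b / 2) s ^ 2 + o(s ^ 2)` at `0`. -/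
def HasTaylorTwo (f : ℝ → ℝ) (a b : ℝ) : Prop :=
  (fun s => f s - f 0 - a * s - b / 2 * s ^ 2) =o[𝓝 0] (fun s => s ^ 2)

namespace HasTaylorTwo

variable {f f₁ f₂ : ℝ → ℝ} {a a₁ a₂ b b₁ b₂ : ℝ}

theorem sub (h₁ : HasTaylorTwo f₁ a₁ b₁) (h₂ : HasTaylorTwo f₂ a₂ b₂) :
    HasTaylorTwo (fun s => f₁ s - f₂ s) (a₁ - a₂) (b₁ - b₂) := by
  refine (Asymptotics.IsLittleO.sub h₁ h₂).congr_left fun s => ?_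
  ring

theorem add (h₁ : HasTaylorTwo f₁ a₁ b₁) (h₂ : HasTaylorTwo f₂ a₂ b₂) :
    HasTaylorTwo (fun s => f₁ s + f₂ s) (a₁ + a₂) (b₁ + b₂) := by
  refine (Asymptotics.IsLittleO.add h₁ h₂).congr_left fun s => ?_
  ring

theorem const_mul (c : ℝ) (h : HasTaylorTwo f a b) :
    HasTaylorTwo (fun s => c * f s) (c * a) (c * b) := by
  refine (Asymptotics.IsLittleO.const_mul_left h c).congr_left fun s => ?_
  ring

theorem congr (h : HasTaylorTwo f₁ a₁ b₁) (hf : ∀ s, f₁ s = f₂ s) (ha : a₁ = a₂) (hb : b₁ = b₂) :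
    HasTaylorTwo f₂ a₂ b₂ := by
  obtain rfl : f₁ = f₂ := funext hf
  subst ha hb
  exact h

theorem quadratic (c a b : ℝ) : HasTaylorTwo (fun s => c + a * s + b / 2 * s ^ 2) a b := by
  refine (Asymptotics.isLittleO_zero _ _).congr_left fun s => ?_
  ring

theorem of_hasDerivAt {f' : ℝ → ℝ} (h₁ : ∀ᶠ s in 𝓝 (0 : ℝ), HasDerivAt f (f' s) s)
    (h₂ : HasDerivAt f' b 0) : HasTaylorTwo f (f' 0) b := by
  refine Asymptotics.isLittleO_iff.2 fun c hc => ?_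
  have h₃ := (hasDerivAt_iff_isLittleO.1 h₂).def hc
  obtain ⟨ε, hε, hball⟩ := Metric.eventually_nhds_iff_ball.1 (h₁.and h₃)
  refine Metric.eventually_nhds_iff_ball.2 ⟨ε, hε, fun s hs => ?_⟩
  have hs' : |s| < ε := by simpa using hs
  have hder : ∀ t ∈ Metric.closedBall (0 : ℝ) |s|,
      HasDerivWithinAt (fun t => f t - f 0 - f' 0 * t - b / 2 * t ^ 2)
        (f' t - f' 0 - b * t) (Metric.closedBall (0 : ℝ) |s|) t := by
    intro t ht
    have ht' : t ∈ Metric.ball (0 : ℝ) ε := by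
      simp only [Metric.mem_closedBall, Metric.mem_ball, Real.dist_eq, sub_zero] at ht ⊢
      linarith
    have := (((hball t ht').1.sub_const (f 0)).sub ((hasDerivAt_id t).const_mul (f' 0))).sub
      (((hasDerivAt_id t).pow 2).const_mul (b / 2))
    refine (this.congr_deriv ?_).hasDerivWithinAt
    simp
    ring
  have hbound : ∀ t ∈ Metric.closedBall (0 : ℝ) |s|, ‖f' t - f' 0 - b * t‖ ≤ c * |s| := by
    intro t ht
    have ht1 : |t| ≤ |s| := by simpa using ht
    have ht' : t ∈ Metric.ball (0 : ℝ) ε := by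
      simp only [Metric.mem_ball, Real.dist_eq, sub_zero]
      linarith
    have := (hball t ht').2
    simp only [sub_zero, smul_eq_mul, Real.norm_eq_abs] at this ⊢
    rw [mul_comm b t]
    exact this.trans (mul_le_mul_of_nonneg_left ht1 hc.le)
  have := (convex_closedBall (0 : ℝ) |s|).norm_image_sub_le_of_norm_hasDerivWithin_le hder hbound
    (Metric.mem_closedBall_self (abs_nonneg s)) (show s ∈ Metric.closedBall (0 : ℝ) |s| by simp)
  simp only [sub_zero, sub_self, mul_zero, Real.norm_eq_abs] at this
  simp only [Real.norm_eq_abs, abs_pow]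
  have h0 : f 0 - f 0 - 0 - b / 2 * 0 ^ 2 = 0 := by ring
  refine le_trans (le_of_eq ?_) (this.trans (le_of_eq ?_))
  · congr 1; ring
  · ring

theorem nonpos_of_isLocalMax (h : HasTaylorTwo f 0 b) (hm : IsLocalMax f 0) : b ≤ 0 := by
  by_contra! hb
  have h1 := Asymptotics.isLittleO_iff.1 h (show (0 : ℝ) < b / 4 by linarith)
  obtain ⟨ε, hε, hball⟩ := Metric.eventually_nhds_iff_ball.1 (h1.and hm)
  have hmem : ε / 2 ∈ Metric.ball (0 : ℝ) ε := by
    simp only [Metric.mem_ball, Real.dist_eq, sub_zero]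
    rw [abs_of_pos (by linarith)]; linarith
  obtain ⟨h2, h3⟩ := hball _ hmem
  simp only [Real.norm_eq_abs, abs_pow, sq_abs] at h2
  have h4 := (abs_le.1 h2).1
  have : 0 < b * (ε / 2) ^ 2 := by positivity
  nlinarith

end HasTaylorTwo

section Doubling

variable {E : Type*} [NormedAddCommGroup E] [InnerProductSpace ℝ E]

/-- The square root of the matrix `I + (p - 2) n ⊗ n`, `n = P / |P|`, applied to `ξ`. -/
noncomputable def coeffSqrt (p : ℝ) (P ξ : E) : E :=
  ξ + ((√(p - 1) - 1) * ⟪‖P‖⁻¹ • P, ξ⟫) • (‖P‖⁻¹ • P)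

theorem coeffSqrt_sub (p : ℝ) (P ξ ζ : E) :
    coeffSqrt p P (ξ - ζ) = coeffSqrt p P ξ - coeffSqrt p P ζ := by
  simp only [coeffSqrt, inner_sub_right, mul_sub, sub_smul]
  abel

theorem coeffSqrt_smul (p : ℝ) (P : E) (c : ℝ) (ξ : E) :
    coeffSqrt p P (c • ξ) = c • coeffSqrt p P ξ := by
  simp only [coeffSqrt, inner_smul_right, smul_add, smul_smul]
  congr 2
  ring

theorem coeffSqrt_sum {ι : Type*} (p : ℝ) (P : E) (s : Finset ι) (f : ι → E) :
    coeffSqrt p P (∑ i ∈ s, f i) = ∑ i ∈ s, coeffSqrt p P (f i) := by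
  simp only [coeffSqrt, inner_sum, Finset.mul_sum, Finset.sum_smul, Finset.sum_add_distrib]

theorem coeffSqrt_pos_smul (p : ℝ) {c : ℝ} (hc : 0 < c) (P ξ : E) :
    coeffSqrt p (c • P) ξ = coeffSqrt p P ξ := by
  have : ‖c • P‖⁻¹ • c • P = ‖P‖⁻¹ • P := by
    rw [norm_smul, Real.norm_of_nonneg hc.le, smul_smul]
    congr 1
    field_simp
  simp only [coeffSqrt, this]

variable [FiniteDimensional ℝ E]

variable (E) in
/-- The constant `A` controls the ellipticity and the Lipschitz behaviour of `coeffSqrt p`. -/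
structure CoeffBound (p A : ℝ) : Prop where
  one_le : 1 ≤ A
  upper : ∀ P : E, ∑ i, ‖coeffSqrt p P (stdOrthonormalBasis ℝ E i)‖ ^ 2 ≤ A
  lower : ∀ P w : E, P ≠ 0 →
    ‖w‖ ^ 2 ≤ A * ∑ i, ⟪w, coeffSqrt p P (stdOrthonormalBasis ℝ E i)⟫ ^ 2
  lipschitz : ∀ P Q : E, P ≠ 0 → Q ≠ 0 →
    ∑ i, ‖coeffSqrt p P (stdOrthonormalBasis ℝ E i) -
      coeffSqrt p Q (stdOrthonormalBasis ℝ E i)‖ ^ 2 ≤ A * (‖P - Q‖ / ‖Q‖) ^ 2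
  reflect : ∀ Q e : E, Q ≠ 0 → ‖e‖ = 1 →
    ∃ ν : E, ‖ν‖ = 1 ∧ ∃ τ : ℝ, coeffSqrt p Q ν = τ • e ∧ 1 ≤ A * τ ^ 2

/-- `U` solves `tr (A(∇U) D²U) = g(∇U)` on `S` away from the critical points, where
`A(P) = I + (p - 2) P ⊗ P / |P|²`. -/
def IsNondivSolution (p : ℝ) (g : E → ℝ) (U : E → ℝ) (S : Set E) : Prop :=
  ∀ x ∈ S, ∃ P : E, HasGradientAt U P x ∧ (P ≠ 0 → ∃ H : E →ₗ[ℝ] E →ₗ[ℝ] ℝ,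
    (∀ ξ : E, HasTaylorTwo (fun s => U (x + s • ξ)) ⟪P, ξ⟫ (H ξ ξ)) ∧
    ∑ i, H (coeffSqrt p P (stdOrthonormalBasis ℝ E i))
      (coeffSqrt p P (stdOrthonormalBasis ℝ E i)) = g P)

theorem IsNondivSolution.continuousOn {p : ℝ} {g U : E → ℝ} {S : Set E}
    (h : IsNondivSolution p g U S) : ContinuousOn U S := fun x hx =>
  (h x hx).choose_spec.1.hasFDerivAt.continuousAt.continuousWithinAt

theorem IsNondivSolution.mono {p : ℝ} {g U : E → ℝ} {S T : Set E}
    (h : IsNondivSolution p g U S) (hTS : T ⊆ S) : IsNondivSolution p g U T :=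
  fun x hx => h x (hTS hx)

theorem sum_reflection_eq (p : ℝ) (Q ν : E) (hν : ν = 0 ∨ ‖ν‖ = 1) (H : E →ₗ[ℝ] E →ₗ[ℝ] ℝ) :
    ∑ i, H (coeffSqrt p Q (stdOrthonormalBasis ℝ E i -
        (2 * ⟪ν, stdOrthonormalBasis ℝ E i⟫) • ν))
      (coeffSqrt p Q (stdOrthonormalBasis ℝ E i - (2 * ⟪ν, stdOrthonormalBasis ℝ E i⟫) • ν)) =
    ∑ i, H (coeffSqrt p Q (stdOrthonormalBasis ℝ E i))
      (coeffSqrt p Q (stdOrthonormalBasis ℝ E i)) := by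
  rcases hν with rfl | hν
  · simp
  set e := stdOrthonormalBasis ℝ E
  have h1 : ∑ i, ⟪ν, e i⟫ • coeffSqrt p Q (e i) = coeffSqrt p Q ν := by
    conv_rhs => rw [← e.sum_repr' ν]
    rw [coeffSqrt_sum]
    simp only [coeffSqrt_smul, real_inner_comm]
  have h2 : ∑ i, ⟪ν, e i⟫ ^ 2 = 1 := by
    have := e.sum_sq_norm_inner_left ν
    simpa [hν] using this
  set w := coeffSqrt p Q ν
  have h3 : ∑ i, ⟪ν, e i⟫ * H (coeffSqrt p Q (e i)) w = H w w := by
    conv_rhs =>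
      rw [show H w w = H.flip w (∑ i, ⟪ν, e i⟫ • coeffSqrt p Q (e i)) by
        rw [h1, LinearMap.flip_apply], map_sum]
    simp
  have h4 : ∑ i, ⟪ν, e i⟫ * H w (coeffSqrt p Q (e i)) = H w w := by
    conv_rhs => rw [show H w w = H w (∑ i, ⟪ν, e i⟫ • coeffSqrt p Q (e i)) by rw [h1], map_sum]
    simp
  have h5 : ∀ i, H (coeffSqrt p Q (e i - (2 * ⟪ν, e i⟫) • ν))
      (coeffSqrt p Q (e i - (2 * ⟪ν, e i⟫) • ν)) = H (coeffSqrt p Q (e i)) (coeffSqrt p Q (e i))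
      - 2 * (⟪ν, e i⟫ * H (coeffSqrt p Q (e i)) w) - 2 * (⟪ν, e i⟫ * H w (coeffSqrt p Q (e i)))
      + 4 * H w w * ⟪ν, e i⟫ ^ 2 := by
    intro i
    simp only [coeffSqrt_sub, coeffSqrt_smul, map_sub, map_smul, LinearMap.sub_apply,
      LinearMap.smul_apply, smul_eq_mul]
    ring
  simp only [h5, Finset.sum_add_distrib, Finset.sum_sub_distrib, ← Finset.mul_sum, h2, h3, h4]
  ring

/-- Second order necessary condition at a maximum of `U x - U y - F (x - y) - G x`, tested with the
coupling of the two variables given by the reflection across `ν` (none if `ν = 0`). -/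
theorem IsNondivSolution.doubling {p : ℝ} {g U F G : E → ℝ} {S : Set E}
    (hU : IsNondivSolution p g U S) {x y Q K ν : E} {BF BG : E → ℝ}
    (hx : x ∈ S) (hy : y ∈ S)
    (hmax : IsLocalMax (fun z : E × E => U z.1 - U z.2 - F (z.1 - z.2) - G z.1) (x, y))
    (hF : HasGradientAt F Q (x - y)) (hG : HasGradientAt G K x)
    (hF2 : ∀ ξ, HasTaylorTwo (fun s => F (x - y + s • ξ)) ⟪Q, ξ⟫ (BF ξ))
    (hG2 : ∀ ξ, HasTaylorTwo (fun s => G (x + s • ξ)) ⟪K, ξ⟫ (BG ξ))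
    (hQ : Q ≠ 0) (hQK : Q + K ≠ 0) (hν : ν = 0 ∨ ‖ν‖ = 1) :
    g (Q + K) - g Q ≤
      ∑ i, BF (coeffSqrt p (Q + K) (stdOrthonormalBasis ℝ E i) -
        coeffSqrt p Q (stdOrthonormalBasis ℝ E i - (2 * ⟪ν, stdOrthonormalBasis ℝ E i⟫) • ν)) +
      ∑ i, BG (coeffSqrt p (Q + K) (stdOrthonormalBasis ℝ E i)) := by
  obtain ⟨Px, hPx, hHx⟩ := hU x hx
  obtain ⟨Py, hPy, hHy⟩ := hU y hy
  have hline : ∀ ξ ζ : E, IsLocalMax (fun s : ℝ => U (x + s • ξ) - U (y + s • ζ) -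
      F (x - y + s • (ξ - ζ)) - G (x + s • ξ)) 0 := by
    intro ξ ζ
    have hc : ContinuousAt (fun s : ℝ => ((x + s • ξ, y + s • ζ) : E × E)) 0 := by fun_prop
    have h0 : ((x + (0 : ℝ) • ξ, y + (0 : ℝ) • ζ) : E × E) = (x, y) := by simp
    have := (h0.symm ▸ hmax : IsLocalMax _ (x + (0 : ℝ) • ξ, y + (0 : ℝ) • ζ)).comp_tendsto
      (g := fun s : ℝ => ((x + s • ξ, y + s • ζ) : E × E)) hc
    refine (iff_of_eq (congrArg (fun f => IsMaxFilter f (𝓝 0) 0) ?_)).1 this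
    funext s
    simp only [Function.comp]
    congr 3
    module
  have hF' : HasFDerivAt F (InnerProductSpace.toDual ℝ E Q) (x - y) := hF
  have hPyQ : Py = Q := by
    have hm : IsLocalMax (fun z => U x - U z - F (x - z) - G x) y := by
      have hc : ContinuousAt (fun z : E => ((x, z) : E × E)) y := by fun_prop
      exact hmax.comp_tendsto (g := fun z : E => ((x, z) : E × E)) hc
    have hd := ((hPy.hasFDerivAt.const_sub (U x)).sub
      (hF'.comp y ((hasFDerivAt_id y).const_sub x))).sub_const (G x)
    have h0 := hm.hasFDerivAt_eq_zero hd
    refine ext_inner_right ℝ fun ξ => ?_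
    have := congrArg (fun T : E →L[ℝ] ℝ => T ξ) h0
    simp at this
    linarith
  have hPxQ : Px = Q + K := by
    have hm : IsLocalMax (fun z => U z - U y - F (z - y) - G z) x := by
      have hc : ContinuousAt (fun z : E => ((z, y) : E × E)) x := by fun_prop
      exact hmax.comp_tendsto (g := fun z : E => ((z, y) : E × E)) hc
    have hd := ((hPx.hasFDerivAt.sub_const (U y)).sub
      (hF'.comp x ((hasFDerivAt_id x).sub_const y))).sub hG.hasFDerivAt
    have h0 := hm.hasFDerivAt_eq_zero hd
    refine ext_inner_right ℝ fun ξ => ?_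
    have := congrArg (fun T : E →L[ℝ] ℝ => T ξ) h0
    simp at this
    rw [inner_add_left]
    linarith
  subst hPyQ hPxQ
  obtain ⟨Hx, hTx, hEx⟩ := hHx hQK
  obtain ⟨Hy, hTy, hEy⟩ := hHy hQ
  rw [← hEx, ← hEy, ← sum_reflection_eq p Py ν hν Hy, ← Finset.sum_sub_distrib,
    ← Finset.sum_add_distrib]
  refine Finset.sum_le_sum fun i _ => ?_
  set ξ := coeffSqrt p (Py + K) (stdOrthonormalBasis ℝ E i)
  set ζ := coeffSqrt p Py
    (stdOrthonormalBasis ℝ E i - (2 * ⟪ν, stdOrthonormalBasis ℝ E i⟫) • ν)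
  have h1 := (((hTx ξ).sub (hTy ζ)).sub (hF2 (ξ - ζ))).sub (hG2 ξ)
  have h2 : ⟪Py + K, ξ⟫ - ⟪Py, ζ⟫ - ⟪Py, ξ - ζ⟫ - ⟪K, ξ⟫ = 0 := by
    rw [inner_add_left, inner_sub_right]; ring
  rw [h2] at h1
  have := h1.nonpos_of_isLocalMax (hline ξ ζ)
  linarith

end Doubling

namespace HasTaylorTwo

theorem comp_quadratic {φ φ' : ℝ → ℝ} {d A B C : ℝ}
    (h₁ : ∀ᶠ r in 𝓝 A, HasDerivAt φ (φ' r) r) (h₂ : HasDerivAt φ' d A) :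
    HasTaylorTwo (fun s => φ (A + B * s + C * s ^ 2)) (φ' A * B) (d * B ^ 2 + 2 * φ' A * C) := by
  have hq : ∀ s : ℝ, HasDerivAt (fun s : ℝ => A + B * s + C * s ^ 2) (B + 2 * C * s) s := by
    intro s
    have := (((hasDerivAt_id s).const_mul B).const_add A).add
      (((hasDerivAt_id s).pow 2).const_mul C)
    refine this.congr_deriv ?_
    simp
    ring
  have hc : ContinuousAt (fun s : ℝ => A + B * s + C * s ^ 2) 0 := (hq 0).continuousAt
  have h0 : A + B * 0 + C * 0 ^ 2 = A := by ring
  have hder : ∀ᶠ s in 𝓝 (0 : ℝ), HasDerivAt (fun s => φ (A + B * s + C * s ^ 2))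
      (φ' (A + B * s + C * s ^ 2) * (B + 2 * C * s)) s := by
    have : ∀ᶠ s in 𝓝 (0 : ℝ), HasDerivAt φ (φ' (A + B * s + C * s ^ 2)) (A + B * s + C * s ^ 2) :=
      hc.eventually (p := fun r => HasDerivAt φ (φ' r) r) (by simpa only [h0] using h₁)
    filter_upwards [this] with s hs
    exact hs.comp s (hq s)
  have hder2 : HasDerivAt (fun s => φ' (A + B * s + C * s ^ 2) * (B + 2 * C * s))
      (d * B ^ 2 + 2 * φ' A * C) 0 := by
    have h3 : HasDerivAt φ' d (A + B * 0 + C * 0 ^ 2) := by rwa [h0]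
    have := (h3.comp (0 : ℝ) (hq 0)).mul (((hasDerivAt_id (0 : ℝ)).const_mul (2 * C)).const_add B)
    refine this.congr_deriv ?_
    simp
    ring
  refine (of_hasDerivAt hder hder2).congr (fun _ => rfl) ?_ rfl
  simp

variable {E : Type*} [NormedAddCommGroup E] [InnerProductSpace ℝ E]

theorem norm_sq_line (w ξ : E) (s : ℝ) :
    ‖w + s • ξ‖ ^ 2 = ‖w‖ ^ 2 + 2 * ⟪w, ξ⟫ * s + ‖ξ‖ ^ 2 * s ^ 2 := by
  rw [norm_add_sq_real, inner_smul_right, norm_smul, mul_pow, Real.norm_eq_abs, sq_abs]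
  ring

theorem norm_sq (w ξ : E) :
    HasTaylorTwo (fun s => ‖w + s • ξ‖ ^ 2) (2 * ⟪w, ξ⟫) (2 * ‖ξ‖ ^ 2) :=
  (quadratic (‖w‖ ^ 2) (2 * ⟪w, ξ⟫) (2 * ‖ξ‖ ^ 2)).congr
    (fun s => by rw [norm_sq_line]; ring) rfl rfl

theorem inner_line (Z w ξ : E) : HasTaylorTwo (fun s => ⟪Z, w + s • ξ⟫) ⟪Z, ξ⟫ 0 :=
  (quadratic ⟪Z, w⟫ ⟪Z, ξ⟫ 0).congr
    (fun s => by rw [inner_add_right, inner_smul_right]; ring) rfl rfl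

theorem norm_line {w : E} (hw : w ≠ 0) (ξ : E) :
    HasTaylorTwo (fun s => ‖w + s • ξ‖) ⟪‖w‖⁻¹ • w, ξ⟫
      ((‖ξ‖ ^ 2 - ⟪‖w‖⁻¹ • w, ξ⟫ ^ 2) / ‖w‖) := by
  have hpos : 0 < ‖w‖ := norm_pos_iff.2 hw
  have hsq : √(‖w‖ ^ 2) = ‖w‖ := Real.sqrt_sq hpos.le
  have h1 : ∀ᶠ r in 𝓝 (‖w‖ ^ 2), HasDerivAt Real.sqrt (1 / (2 * √r)) r := by
    filter_upwards [lt_mem_nhds (show 0 < ‖w‖ ^ 2 by positivity)] with r hr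
    exact Real.hasDerivAt_sqrt hr.ne'
  have h2 : HasDerivAt (fun r => 1 / (2 * √r)) (-1 / (4 * ‖w‖ ^ 3)) (‖w‖ ^ 2) := by
    have := ((Real.hasDerivAt_sqrt (show ‖w‖ ^ 2 ≠ 0 by positivity)).const_mul 2).inv
      (by rw [hsq]; positivity)
    simp only [one_div]
    refine this.congr_deriv ?_
    rw [hsq]
    field_simp
    norm_num
  refine (comp_quadratic (B := 2 * ⟪w, ξ⟫) (C := ‖ξ‖ ^ 2) h1 h2).congr (fun s => ?_) ?_ ?_
  · rw [← norm_sq_line, Real.sqrt_sq (norm_nonneg _)]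
  · rw [hsq, real_inner_smul_left]
    field_simp
  · rw [hsq, real_inner_smul_left]
    field_simp
    ring

theorem exp_norm_sq (k : ℝ) (w ξ : E) :
    HasTaylorTwo (fun s => Real.exp (-(k * ‖w + s • ξ‖ ^ 2)))
      (-(2 * k * Real.exp (-(k * ‖w‖ ^ 2)) * ⟪w, ξ⟫))
      (Real.exp (-(k * ‖w‖ ^ 2)) * (4 * k ^ 2 * ⟪w, ξ⟫ ^ 2 - 2 * k * ‖ξ‖ ^ 2)) := by
  have h0 : ∀ r, HasDerivAt (fun r => Real.exp (-(k * r))) (-k * Real.exp (-(k * r))) r := by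
    intro r
    have := ((hasDerivAt_id r).const_mul k).neg.exp
    refine this.congr_deriv ?_
    simp
    ring
  have h2 : HasDerivAt (fun r => -k * Real.exp (-(k * r)))
      (-k * (-k * Real.exp (-(k * ‖w‖ ^ 2)))) (‖w‖ ^ 2) := (h0 _).const_mul (-k)
  refine (comp_quadratic (B := 2 * ⟪w, ξ⟫) (C := ‖ξ‖ ^ 2)
    (Eventually.of_forall h0) h2).congr (fun s => ?_) ?_ ?_
  · rw [← norm_sq_line]
  · ring
  · ring

end HasTaylorTwo

section Gradients

variable {E : Type*} [NormedAddCommGroup E] [InnerProductSpace ℝ E] [CompleteSpace E]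

theorem hasGradientAt_of_hasFDerivAt {f : E → ℝ} {f' : E →L[ℝ] ℝ} {P x : E}
    (h : HasFDerivAt f f' x) (hP : ∀ ξ, f' ξ = ⟪P, ξ⟫) : HasGradientAt f P x := by
  have : f' = InnerProductSpace.toDual ℝ E P := by
    ext ξ; simp [hP]
  rw [this] at h
  exact h

theorem hasGradientAt_norm_sub_sq (c x : E) :
    HasGradientAt (fun w => ‖w - c‖ ^ 2) ((2 : ℝ) • (x - c)) x :=
  hasGradientAt_of_hasFDerivAt ((hasFDerivAt_id x).sub_const c).norm_sq
    fun ξ => by simp [inner_smul_left, inner_sub_left]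

theorem hasGradientAt_norm {x : E} (hx : x ≠ 0) :
    HasGradientAt (fun w => ‖w‖) (‖x‖⁻¹ • x) x := by
  have hpos : 0 < ‖x‖ := norm_pos_iff.2 hx
  have h := ((hasFDerivAt_id x).norm_sq).sqrt (by simpa using hx)
  have h2 : HasFDerivAt (fun w : E => ‖w‖) _ x :=
    h.congr_of_eventuallyEq (Eventually.of_forall fun w => by simp)
  refine hasGradientAt_of_hasFDerivAt h2 fun ξ => ?_
  simp [real_inner_smul_left]
  ring

theorem hasGradientAt_inner (Z x : E) : HasGradientAt (fun w => ⟪Z, w⟫) Z x :=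
  hasGradientAt_of_hasFDerivAt (innerSL ℝ Z).hasFDerivAt fun ξ => by simp

theorem HasGradientAt.fun_add {f g : E → ℝ} {P Q x : E} (hf : HasGradientAt f P x)
    (hg : HasGradientAt g Q x) : HasGradientAt (fun w => f w + g w) (P + Q) x :=
  hasGradientAt_of_hasFDerivAt (hf.hasFDerivAt.add hg.hasFDerivAt)
    fun ξ => by simp [inner_add_left]

theorem HasGradientAt.fun_const_mul {f : E → ℝ} {P x : E} (c : ℝ) (hf : HasGradientAt f P x) :
    HasGradientAt (fun w => c * f w) (c • P) x :=
  hasGradientAt_of_hasFDerivAt (hf.hasFDerivAt.const_mul c)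
    fun ξ => by simp [inner_smul_left]

theorem hasGradientAt_exp_norm_sq (k : ℝ) (c x : E) :
    HasGradientAt (fun w => Real.exp (-(k * ‖w - c‖ ^ 2)))
      (-(2 * k * Real.exp (-(k * ‖x - c‖ ^ 2))) • (x - c)) x := by
  have := ((hasGradientAt_norm_sub_sq c x).hasFDerivAt.const_mul k).neg.exp
  refine hasGradientAt_of_hasFDerivAt this fun ξ => ?_
  simp [inner_smul_left, inner_sub_left]
  ring

end Gradients

section CoeffBound

variable {E : Type*} [NormedAddCommGroup E] [InnerProductSpace ℝ E]

theorem norm_inv_smul_self_le (P : E) : ‖‖P‖⁻¹ • P‖ ≤ 1 := by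
  rw [norm_smul, norm_inv, norm_norm]
  exact inv_mul_le_one

theorem norm_inv_smul_self {P : E} (hP : P ≠ 0) : ‖‖P‖⁻¹ • P‖ = 1 := by
  rw [norm_smul, norm_inv, norm_norm, inv_mul_cancel₀ (norm_ne_zero_iff.2 hP)]

theorem norm_add_rankOne_le (θ : ℝ) {n : E} (hn : ‖n‖ ≤ 1) (ξ : E) :
    ‖ξ + (θ * ⟪n, ξ⟫) • n‖ ≤ (1 + |θ|) * ‖ξ‖ := by
  have h1 : |⟪n, ξ⟫| ≤ ‖ξ‖ :=
    (abs_real_inner_le_norm n ξ).trans (mul_le_of_le_one_left (norm_nonneg _) hn)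
  calc ‖ξ + (θ * ⟪n, ξ⟫) • n‖ ≤ ‖ξ‖ + ‖(θ * ⟪n, ξ⟫) • n‖ := norm_add_le _ _
    _ ≤ ‖ξ‖ + |θ| * ‖ξ‖ * 1 := by
        rw [norm_smul, Real.norm_eq_abs, abs_mul]
        gcongr
    _ = _ := by ring

theorem add_rankOne_comp {θ θ' : ℝ} (h : θ + θ' + θ * θ' = 0) {n : E} (hn : ‖n‖ = 1) (ξ : E) :
    (ξ + (θ * ⟪n, ξ⟫) • n) + (θ' * ⟪n, ξ + (θ * ⟪n, ξ⟫) • n⟫) • n = ξ := by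
  rw [inner_add_right, inner_smul_right, real_inner_self_eq_norm_sq, hn, add_assoc, ← add_smul]
  have : θ * ⟪n, ξ⟫ + θ' * (⟪n, ξ⟫ + θ * ⟪n, ξ⟫ * 1 ^ 2) = 0 := by
    linear_combination ⟪n, ξ⟫ * h
  rw [this]
  simp

theorem norm_direction_sub_le {P Q : E} (hP : P ≠ 0) (hQ : Q ≠ 0) :
    ‖‖P‖⁻¹ • P - ‖Q‖⁻¹ • Q‖ ≤ 2 * (‖P - Q‖ / ‖Q‖) := by
  have hp : 0 < ‖P‖ := norm_pos_iff.2 hP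
  have hq : 0 < ‖Q‖ := norm_pos_iff.2 hQ
  have h1 : ‖P‖⁻¹ • P - ‖Q‖⁻¹ • Q = ‖Q‖⁻¹ • (P - Q) + (‖Q‖⁻¹ * (‖Q‖ - ‖P‖)) • (‖P‖⁻¹ • P) := by
    rw [smul_smul, mul_sub, sub_mul, inv_mul_cancel₀ hq.ne', mul_assoc, mul_inv_cancel₀ hp.ne']
    module
  have h2 := norm_inv_smul_self_le P
  have h3 : |‖Q‖ - ‖P‖| ≤ ‖P - Q‖ := by rw [abs_sub_comm]; exact abs_norm_sub_norm_le P Q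
  calc _ ≤ ‖‖Q‖⁻¹ • (P - Q)‖ + ‖(‖Q‖⁻¹ * (‖Q‖ - ‖P‖)) • (‖P‖⁻¹ • P)‖ := by
        rw [h1]; exact norm_add_le _ _
    _ ≤ ‖Q‖⁻¹ * ‖P - Q‖ + ‖Q‖⁻¹ * ‖P - Q‖ * 1 := by
        rw [norm_smul, norm_smul (‖Q‖⁻¹ * _), Real.norm_eq_abs, Real.norm_eq_abs, abs_mul,
          abs_of_pos (inv_pos.2 hq)]
        gcongr
    _ = _ := by ring

variable [FiniteDimensional ℝ E]

variable (E) in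
theorem exists_coeffBound {p : ℝ} (hp : 1 < p) : ∃ A, CoeffBound E p A := by
  set n : ℝ := (Module.finrank ℝ E : ℝ)
  have hn : 0 ≤ n := Nat.cast_nonneg _
  set θ := √(p - 1) - 1 with hθ
  have hs : 0 < √(p - 1) := Real.sqrt_pos.2 (by linarith)
  set θ' := (√(p - 1))⁻¹ - 1 with hθ'
  have h12 : θ + θ' + θ * θ' = 0 := by
    rw [hθ, hθ']; field_simp; ring
  have h21 : θ' + θ + θ' * θ = 0 := by linarith
  set e := stdOrthonormalBasis ℝ E with he
  have hcard : ∀ (f : Fin (Module.finrank ℝ E) → ℝ) (c : ℝ), (∀ i, f i ≤ c) → ∑ i, f i ≤ n * c := by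
    intro f c hf
    refine (Finset.sum_le_sum fun i _ => hf i).trans (le_of_eq ?_)
    simp [n]
  have ha : 0 ≤ n * (1 + |θ|) ^ 2 := by positivity
  have hb : 0 ≤ n * (16 * θ ^ 2) := by positivity
  have hc : 0 ≤ (1 + |θ'|) ^ 2 := by positivity
  refine ⟨1 + n * (1 + |θ|) ^ 2 + n * (16 * θ ^ 2) + (1 + |θ'|) ^ 2, by linarith, ?_, ?_, ?_, ?_⟩
  · intro P
    refine (hcard _ ((1 + |θ|) ^ 2) fun i => ?_).trans (by linarith)
    have := norm_add_rankOne_le θ (norm_inv_smul_self_le P) (e i)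
    rw [e.norm_eq_one, mul_one] at this
    exact pow_le_pow_left₀ (norm_nonneg _) this 2
  · intro P w hP
    have h1 : ∑ i, ⟪w, coeffSqrt p P (e i)⟫ ^ 2 = ‖coeffSqrt p P w‖ ^ 2 := by
      rw [← e.sum_sq_norm_inner_left]
      refine Finset.sum_congr rfl fun i _ => ?_
      rw [Real.norm_eq_abs, sq_abs]
      congr 1
      simp only [coeffSqrt, inner_add_right, inner_add_left, inner_smul_left, inner_smul_right]
      rw [real_inner_comm w P]
      simp
      ring
    rw [h1]
    have h2 := add_rankOne_comp h12 (norm_inv_smul_self hP) w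
    have h3 := norm_add_rankOne_le θ' (norm_inv_smul_self_le P) (coeffSqrt p P w)
    have h4 : coeffSqrt p P w + (θ' * ⟪‖P‖⁻¹ • P, coeffSqrt p P w⟫) • (‖P‖⁻¹ • P) = w := h2
    rw [h4] at h3
    have h5 := pow_le_pow_left₀ (norm_nonneg _) h3 2
    rw [mul_pow] at h5
    refine h5.trans (mul_le_mul_of_nonneg_right (by linarith) (by positivity))
  · intro P Q hP hQ
    have hd := norm_direction_sub_le hP hQ
    set r := ‖P - Q‖ / ‖Q‖
    have hr : 0 ≤ r := by positivity
    refine (hcard _ ((16 * θ ^ 2) * r ^ 2) fun i => ?_).trans ?_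
    · have hu := norm_inv_smul_self_le P
      have hv := norm_inv_smul_self_le Q
      set u := ‖P‖⁻¹ • P
      set v := ‖Q‖⁻¹ • Q
      have h1 : coeffSqrt p P (e i) - coeffSqrt p Q (e i) =
          θ • (⟪u - v, e i⟫ • u + ⟪v, e i⟫ • (u - v)) := by
        change e i + (θ * ⟪u, e i⟫) • u - (e i + (θ * ⟪v, e i⟫) • v) = _
        rw [inner_sub_left]
        module
      have h2 : |⟪u - v, e i⟫| ≤ ‖u - v‖ := by
        simpa [e.norm_eq_one] using abs_real_inner_le_norm (u - v) (e i)
      have h3 : |⟪v, e i⟫| ≤ 1 := by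
        have := abs_real_inner_le_norm v (e i)
        rw [e.norm_eq_one, mul_one] at this
        exact this.trans hv
      have h4 : ‖coeffSqrt p P (e i) - coeffSqrt p Q (e i)‖ ≤ |θ| * (4 * r) := by
        rw [h1, norm_smul, Real.norm_eq_abs]
        gcongr
        calc _ ≤ ‖⟪u - v, e i⟫ • u‖ + ‖⟪v, e i⟫ • (u - v)‖ := norm_add_le _ _
          _ ≤ ‖u - v‖ * 1 + 1 * ‖u - v‖ := by
            rw [norm_smul ⟪u - v, e i⟫ u, norm_smul ⟪v, e i⟫ (u - v), Real.norm_eq_abs,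
              Real.norm_eq_abs]
            gcongr
          _ ≤ 4 * r := by linarith
      have h5 := pow_le_pow_left₀ (norm_nonneg _) h4 2
      rw [mul_pow, sq_abs] at h5
      linarith
    · have : 0 ≤ r ^ 2 := by positivity
      rw [← mul_assoc]
      exact mul_le_mul_of_nonneg_right (by linarith) this
  · intro Q w hQ hw
    set m := ‖Q‖⁻¹ • Q with hm
    set μ := w + (θ' * ⟪m, w⟫) • m with hμ
    have h1 : coeffSqrt p Q μ = w := add_rankOne_comp h21 (norm_inv_smul_self hQ) w
    have h2 : ‖μ‖ ≤ 1 + |θ'| := by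
      have := norm_add_rankOne_le θ' (norm_inv_smul_self_le Q) w
      rwa [hw, mul_one] at this
    have h3 : μ ≠ 0 := by
      intro h0
      rw [h0] at h1
      have : w = 0 := by rw [← h1]; simp [coeffSqrt]
      rw [this] at hw
      simp at hw
    have h4 : 0 < ‖μ‖ := norm_pos_iff.2 h3
    refine ⟨‖μ‖⁻¹ • μ, norm_inv_smul_self h3, ‖μ‖⁻¹, by rw [coeffSqrt_smul, h1], ?_⟩
    rw [inv_pow, ← div_eq_mul_inv, one_le_div (by positivity)]
    have := pow_le_pow_left₀ (norm_nonneg _) h2 2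
    linarith

end CoeffBound

section DoublingEstimates

variable {E : Type*} [NormedAddCommGroup E] [InnerProductSpace ℝ E] [FiniteDimensional ℝ E]

/-- The pairs of points of `E × E` with first point within `R` of `x₀` and difference within `h`
of `c`. -/
def pairTube (x₀ c : E) (R h : ℝ) : Set (E × E) :=
  {z | ‖z.1 - x₀‖ ≤ R ∧ ‖z.1 - z.2 - c‖ ≤ h}

theorem isCompact_pairTube (x₀ c : E) (R h : ℝ) : IsCompact (pairTube x₀ c R h) := by
  have : pairTube x₀ c R h = (fun z : E × E => (z.1, z.1 - z.2)) '' 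
      (closedBall x₀ R ×ˢ closedBall c h) := by
    ext z
    simp only [pairTube, mem_ofPred_eq, mem_image, mem_prod, mem_closedBall, dist_eq_norm]
    constructor
    · exact fun hz => ⟨(z.1, z.1 - z.2), hz, by simp⟩
    · rintro ⟨w, hw, rfl⟩
      simpa using hw
  rw [this]
  exact ((isCompact_closedBall x₀ R).prod (isCompact_closedBall c h)).image (by fun_prop)

theorem pairTube_mem_nhds {x₀ c : E} {R h : ℝ} {z : E × E} (h₁ : ‖z.1 - x₀‖ < R)
    (h₂ : ‖z.1 - z.2 - c‖ < h) : pairTube x₀ c R h ∈ 𝓝 z := by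
  have h3 : ∀ᶠ w : E × E in 𝓝 z, ‖w.1 - x₀‖ < R :=
    ContinuousAt.eventually_lt (by fun_prop) continuousAt_const h₁
  have h4 : ∀ᶠ w : E × E in 𝓝 z, ‖w.1 - w.2 - c‖ < h :=
    ContinuousAt.eventually_lt (by fun_prop) continuousAt_const h₂
  filter_upwards [h3, h4] with w h5 h6 using ⟨h5.le, h6.le⟩

theorem sum_sq_inner_stdOrthonormalBasis (ν : E) :
    ∑ i, ⟪ν, stdOrthonormalBasis ℝ E i⟫ ^ 2 = ‖ν‖ ^ 2 := by
  simpa using (stdOrthonormalBasis ℝ E).sum_sq_norm_inner_left ν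

theorem coupled_sq_le {e : E} (he : ‖e‖ = 1) (d : E) (c : ℝ) {L t m : ℝ} (ht : 0 < t) (hm : 0 ≤ m)
    (hmt : m * t ≤ L) :
    L * ((‖d + c • e‖ ^ 2 - ⟪e, d + c • e⟫ ^ 2) / t) - m * ‖d + c • e‖ ^ 2 ≤
      L / t * ‖d‖ ^ 2 - m / 2 * c ^ 2 := by
  have h1 : ‖d + c • e‖ ^ 2 = ‖d‖ ^ 2 + 2 * c * ⟪e, d⟫ + c ^ 2 := by
    rw [norm_add_sq_real, inner_smul_right, norm_smul, mul_pow, he, Real.norm_eq_abs, sq_abs,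
      real_inner_comm]
    ring
  have h2 : ⟪e, d + c • e⟫ = ⟪e, d⟫ + c := by
    rw [inner_add_right, inner_smul_right, real_inner_self_eq_norm_sq, he]; ring
  have h3 : ⟪e, d⟫ ^ 2 ≤ ‖d‖ ^ 2 := by
    have := abs_real_inner_le_norm e d
    rw [he, one_mul] at this
    exact sq_le_sq.2 (by rwa [abs_norm])
  rw [h1, h2]
  have h4 : m ≤ L / t := (le_div_iff₀ ht).2 hmt
  have h5 : L * ((‖d‖ ^ 2 + 2 * c * ⟪e, d⟫ + c ^ 2 - (⟪e, d⟫ + c) ^ 2) / t) =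
      L / t * (‖d‖ ^ 2 - ⟪e, d⟫ ^ 2) := by ring
  rw [h5]
  have h6 : 0 ≤ L / t * ⟪e, d⟫ ^ 2 - m * ⟪e, d⟫ ^ 2 := by
    rw [← sub_mul]; exact mul_nonneg (by linarith) (sq_nonneg _)
  have h7 := mul_nonneg hm (sq_nonneg (2 * ⟪e, d⟫ + c))
  have h8 := mul_nonneg hm (sub_nonneg.2 h3)
  nlinarith

set_option maxHeartbeats 1000000 in
/-- Doubling of variables with the penalty `⟪Z, w⟫ + L |w| - (m / 2) |w| ^ 2` gives a Lipschitz bound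
at the centre of a ball. -/
theorem IsNondivSolution.doubling_lipschitz {p A : ℝ} (hA : CoeffBound E p A) {g U : E → ℝ}
    {x₀ Z : E} {R h L m κ ρ M Λ : ℝ} (hU : IsNondivSolution p g U (closedBall x₀ (R + h)))
    (hR : 0 < R) (hL : 0 < L) (hm : 0 < m) (hκ : 0 < κ) (hρ : 0 < ρ)
    (hΛ : 0 ≤ Λ) (hmh : m * h ≤ L / 2)
    (hlip : ∀ x y, ‖x - x₀‖ ≤ R → ‖x - y‖ ≤ h → U x - U y - ⟪Z, x - y⟫ ≤ M * ‖x - y‖)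
    (hosc : ∀ x y, ‖x - x₀‖ ≤ R → ‖x - y‖ ≤ h →
      U x - U y - ⟪Z, x - y⟫ ≤ L * ‖x - y‖ - m / 2 * ‖x - y‖ ^ 2 + κ * R ^ 2)
    (hbd : ∀ x y, ‖x - x₀‖ ≤ R → ‖x - y‖ = h →
      U x - U y - ⟪Z, x - y⟫ ≤ L * h - m / 2 * h ^ 2)
    (hZ : ∀ w, L / 2 ≤ ‖w‖ → ‖w‖ ≤ L → ρ ≤ ‖Z + w‖) (hκR : 2 * κ * R < ρ)
    (hg : ∀ w K, L / 2 ≤ ‖w‖ → ‖w‖ ≤ L → ‖K‖ ≤ 2 * κ * R →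
      g (Z + w) - g (Z + w + K) ≤ Λ * ‖K‖)
    (hsmall : A * (2 * κ * R * Λ + 2 * κ * A + 4 * A * L * κ * M / ρ ^ 2) < 2 * m)
    {y₀ : E} (hy₀ : ‖x₀ - y₀‖ ≤ h) :
    U x₀ - U y₀ - ⟪Z, x₀ - y₀⟫ ≤ L * ‖x₀ - y₀‖ := by
  set F : E → ℝ := fun w => ⟪Z, w⟫ + L * ‖w‖ + -(m / 2) * ‖w - 0‖ ^ 2 with hFdef
  set G : E → ℝ := fun x => κ * ‖x - x₀‖ ^ 2 with hGdef
  set Φ : E × E → ℝ := fun z => U z.1 - U z.2 - F (z.1 - z.2) - G z.1 with hΦ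
  set T := pairTube x₀ 0 R h
  have hmem : ∀ z ∈ T, z.1 ∈ closedBall x₀ (R + h) ∧ z.2 ∈ closedBall x₀ (R + h) := by
    rintro ⟨x, y⟩ ⟨h1, h2⟩
    simp only [sub_zero] at h1 h2
    have h0 : 0 ≤ h := (norm_nonneg _).trans h2
    have : ‖y - x₀‖ ≤ R + h := by
      calc ‖y - x₀‖ = ‖(x - x₀) - (x - y)‖ := by congr 1; abel
        _ ≤ _ := (norm_sub_le _ _).trans (add_le_add h1 h2)
    simp only [mem_closedBall, dist_eq_norm]
    exact ⟨by linarith, this⟩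
  have hcont : ContinuousOn Φ T := by
    have h1 : ContinuousOn (fun z : E × E => U z.1) T :=
      hU.continuousOn.comp continuousOn_fst fun z hz => (hmem z hz).1
    have h2 : ContinuousOn (fun z : E × E => U z.2) T :=
      hU.continuousOn.comp continuousOn_snd fun z hz => (hmem z hz).2
    have h3 : Continuous fun z : E × E => F (z.1 - z.2) := by fun_prop
    have h4 : Continuous fun z : E × E => G z.1 := by fun_prop
    exact ((h1.sub h2).sub h3.continuousOn).sub h4.continuousOn
  have hh0 : 0 ≤ h := (norm_nonneg _).trans hy₀
  have hT0 : (x₀, y₀) ∈ T := ⟨by simpa using hR.le, by simpa using hy₀⟩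
  obtain ⟨⟨x, y⟩, hxyT, hxymax⟩ := (isCompact_pairTube x₀ 0 R h).exists_isMaxOn ⟨_, hT0⟩ hcont
  by_cases hpos : Φ (x, y) ≤ 0
  · have h1 : Φ (x₀, y₀) ≤ Φ (x, y) := hxymax hT0
    simp only [hΦ, hFdef, hGdef, sub_zero, sub_self, norm_zero] at h1 hpos
    have h2 : m / 2 * ‖x₀ - y₀‖ ^ 2 ≥ 0 := by positivity
    linarith
  exfalso
  push Not at hpos
  obtain ⟨hxR, hxy⟩ := hxyT
  simp only [sub_zero] at hxR hxy
  set t := ‖x - y‖ with ht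
  set r := ‖x - x₀‖ with hr
  have hpos' : 0 < U x - U y - ⟪Z, x - y⟫ - L * t + m / 2 * t ^ 2 - κ * r ^ 2 := by
    simp only [hΦ, hFdef, hGdef, sub_zero, ← ht, ← hr] at hpos
    linarith
  have hr0 : 0 ≤ r := norm_nonneg _
  have hmt : m * t ≤ L / 2 := (mul_le_mul_of_nonneg_left hxy hm.le).trans hmh
  have ht0 : 0 < t := by
    rw [ht, norm_pos_iff, sub_ne_zero]
    rintro rfl
    have h1 : 0 ≤ κ * r ^ 2 := by positivity
    simp only [ht, sub_self, inner_zero_right, norm_zero] at hpos'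
    linarith
  have hrR : r < R := by
    refine lt_of_le_of_ne hxR fun h1 => ?_
    have := hosc x y hxR hxy
    rw [← ht, ← h1] at this
    linarith
  have hth : t < h := by
    refine lt_of_le_of_ne hxy fun h1 => ?_
    have := hbd x y hxR (ht ▸ h1)
    rw [← h1] at this
    have h1 : 0 ≤ κ * r ^ 2 := by positivity
    linarith
  have hκr : κ * r ^ 2 ≤ M * t := by
    have h1 := hlip x y hxR hxy
    have h2 : m / 2 * t ^ 2 ≤ L * t := by nlinarith
    linarith
  have hloc : IsLocalMax Φ (x, y) :=
    hxymax.isLocalMax (pairTube_mem_nhds hrR (by simpa using hth))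
  have hw0 : x - y ≠ 0 := norm_pos_iff.1 ht0
  set e := ‖x - y‖⁻¹ • (x - y) with he
  have he1 : ‖e‖ = 1 := norm_inv_smul_self hw0
  have hte : x - y = t • e := by rw [he, ht, smul_smul, mul_inv_cancel₀ ht0.ne', one_smul]
  set w := (L - m * t) • e with hw
  have hwn : ‖w‖ = L - m * t := by
    rw [hw, norm_smul, he1, mul_one, Real.norm_of_nonneg (by linarith)]
  have hw1 : L / 2 ≤ ‖w‖ := by linarith
  have hw2 : ‖w‖ ≤ L := by rw [hwn]; nlinarith
  set Q := Z + w with hQdef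
  have hQρ : ρ ≤ ‖Q‖ := hZ w hw1 hw2
  have hQpos : 0 < ‖Q‖ := hρ.trans_le hQρ
  have hQ : Q ≠ 0 := norm_pos_iff.1 hQpos
  set K := κ • ((2 : ℝ) • (x - x₀)) with hKdef
  have hKn : ‖K‖ = 2 * κ * r := by
    rw [hKdef, smul_smul, norm_smul, Real.norm_of_nonneg (by positivity)]; ring
  have hKR : ‖K‖ ≤ 2 * κ * R := by rw [hKn]; gcongr
  have hQK : Q + K ≠ 0 := by
    intro h0
    have : ‖Q‖ = ‖K‖ := by rw [eq_neg_of_add_eq_zero_left h0, norm_neg]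
    linarith
  have hF : HasGradientAt F Q (x - y) := by
    have := (((hasGradientAt_inner Z (x - y)).fun_add
      ((hasGradientAt_norm hw0).fun_const_mul L)).fun_add
      ((hasGradientAt_norm_sub_sq 0 (x - y)).fun_const_mul (-(m / 2))))
    have hQ' : Z + L • e + (-(m / 2)) • ((2 : ℝ) • (x - y - 0)) = Q := by
      rw [hQdef, hw, sub_zero, hte]; module
    rwa [← he, hQ'] at this
  have hG : HasGradientAt G K x := (hasGradientAt_norm_sub_sq x₀ x).fun_const_mul κ
  have hF2 : ∀ ξ, HasTaylorTwo (fun s => F (x - y + s • ξ)) ⟪Q, ξ⟫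
      (L * ((‖ξ‖ ^ 2 - ⟪e, ξ⟫ ^ 2) / t) - m * ‖ξ‖ ^ 2) := by
    intro ξ
    refine (((HasTaylorTwo.inner_line Z (x - y) ξ).add
      ((HasTaylorTwo.norm_line hw0 ξ).const_mul L)).add
      ((HasTaylorTwo.norm_sq (x - y) ξ).const_mul (-(m / 2)))).congr (fun s => ?_) ?_ ?_
    · simp [hFdef]
    · have h1 : ⟪x - y, ξ⟫ = t * ⟪e, ξ⟫ := by
        conv_lhs => rw [hte]
        rw [real_inner_smul_left]
      change ⟪Z, ξ⟫ + L * ⟪e, ξ⟫ + -(m / 2) * (2 * ⟪x - y, ξ⟫) = _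
      rw [hQdef, hw, inner_add_left, real_inner_smul_left e, h1]
      ring
    · rw [← he, ← ht]; ring
  have hG2 : ∀ ξ, HasTaylorTwo (fun s => G (x + s • ξ)) ⟪K, ξ⟫ (2 * κ * ‖ξ‖ ^ 2) := by
    intro ξ
    refine ((HasTaylorTwo.norm_sq (x - x₀) ξ).const_mul κ).congr (fun s => ?_) ?_ ?_
    · simp only [hGdef]
      congr 3
      abel
    · rw [hKdef, real_inner_smul_left, real_inner_smul_left]
    · ring
  obtain ⟨ν, hν, τ, hντ, hτ⟩ := hA.reflect Q e hQ he1
  have key := hU.doubling (hmem (x, y) ⟨hxR, by simpa using hxy⟩).1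
    (hmem (x, y) ⟨hxR, by simpa using hxy⟩).2 hloc hF hG hF2 hG2 hQ hQK (Or.inr hν)
  have hA0 : 0 < A := one_pos.trans_le hA.one_le
  have hlow : -(2 * κ * R * Λ) ≤ g (Q + K) - g Q := by
    have h1 := hg w K hw1 hw2 hKR
    have h2 := mul_le_mul_of_nonneg_left hKR hΛ
    simp only [hQdef]
    linarith
  set d : Fin (Module.finrank ℝ E) → E := fun i =>
    coeffSqrt p (Q + K) (stdOrthonormalBasis ℝ E i) - coeffSqrt p Q (stdOrthonormalBasis ℝ E i)
    with hd
  have hD : ∑ i, ‖d i‖ ^ 2 ≤ 4 * A * κ * M * t / ρ ^ 2 := by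
    have h1 := hA.lipschitz (Q + K) Q hQK hQ
    rw [add_sub_cancel_left] at h1
    refine h1.trans ?_
    rw [div_pow, hKn]
    calc A * ((2 * κ * r) ^ 2 / ‖Q‖ ^ 2) ≤ A * ((2 * κ * r) ^ 2 / ρ ^ 2) := by gcongr
      _ = 4 * A * κ * (κ * r ^ 2) / ρ ^ 2 := by ring
      _ ≤ 4 * A * κ * (M * t) / ρ ^ 2 := by gcongr
      _ = _ := by ring
  have hBF : ∀ i, L * ((‖coeffSqrt p (Q + K) (stdOrthonormalBasis ℝ E i) -
        coeffSqrt p Q (stdOrthonormalBasis ℝ E i -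
          (2 * ⟪ν, stdOrthonormalBasis ℝ E i⟫) • ν)‖ ^ 2 -
        ⟪e, coeffSqrt p (Q + K) (stdOrthonormalBasis ℝ E i) -
        coeffSqrt p Q (stdOrthonormalBasis ℝ E i -
          (2 * ⟪ν, stdOrthonormalBasis ℝ E i⟫) • ν)⟫ ^ 2) / t) -
        m * ‖coeffSqrt p (Q + K) (stdOrthonormalBasis ℝ E i) -
        coeffSqrt p Q (stdOrthonormalBasis ℝ E i -
          (2 * ⟪ν, stdOrthonormalBasis ℝ E i⟫) • ν)‖ ^ 2 ≤
      L / t * ‖d i‖ ^ 2 - 2 * m * τ ^ 2 * ⟪ν, stdOrthonormalBasis ℝ E i⟫ ^ 2 := by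
    intro i
    have h1 : coeffSqrt p (Q + K) (stdOrthonormalBasis ℝ E i) -
        coeffSqrt p Q (stdOrthonormalBasis ℝ E i -
          (2 * ⟪ν, stdOrthonormalBasis ℝ E i⟫) • ν) =
        d i + (2 * ⟪ν, stdOrthonormalBasis ℝ E i⟫ * τ) • e := by
      rw [coeffSqrt_sub, coeffSqrt_smul, hντ, smul_smul]
      simp only [hd]
      abel
    rw [h1]
    refine (coupled_sq_le he1 (d i) _ ht0 hm.le (by linarith)).trans (le_of_eq ?_)
    ring
  have hsumF := Finset.sum_le_sum fun i (_ : i ∈ Finset.univ) => hBF i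
  have h0 : ∑ i, (L / t * ‖d i‖ ^ 2 - 2 * m * τ ^ 2 * ⟪ν, stdOrthonormalBasis ℝ E i⟫ ^ 2) =
      L / t * ∑ i, ‖d i‖ ^ 2 - 2 * m * τ ^ 2 := by
    rw [Finset.sum_sub_distrib, ← Finset.mul_sum, ← Finset.mul_sum,
      sum_sq_inner_stdOrthonormalBasis, hν]
    ring
  rw [h0] at hsumF
  have h2 : ∑ i, 2 * κ * ‖coeffSqrt p (Q + K) (stdOrthonormalBasis ℝ E i)‖ ^ 2 ≤ 2 * κ * A := by
    rw [← Finset.mul_sum]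
    exact mul_le_mul_of_nonneg_left (hA.upper (Q + K)) (by positivity)
  have h1 : L / t * ∑ i, ‖d i‖ ^ 2 ≤ 4 * A * L * κ * M / ρ ^ 2 := by
    calc L / t * ∑ i, ‖d i‖ ^ 2 ≤ L / t * (4 * A * κ * M * t / ρ ^ 2) := by gcongr
      _ = _ := by field_simp
  have h3 : 2 * m * τ ^ 2 ≤ 2 * κ * R * Λ + 2 * κ * A + 4 * A * L * κ * M / ρ ^ 2 := by linarith
  have h4 := mul_le_mul_of_nonneg_left h3 hA0.le
  nlinarith

end DoublingEstimates

section Propagation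

variable {E : Type*} [NormedAddCommGroup E] [InnerProductSpace ℝ E] [FiniteDimensional ℝ E]

/-- `U` has slope at most `1` on the unit ball once the linear function `⟪Z, ·⟫` is subtracted, and
`g` is `Λ`-Lipschitz on the slopes that `U` may then have. -/
structure IsFlatSolution (p Λ : ℝ) (g U : E → ℝ) (Z : E) : Prop where
  solution : IsNondivSolution p g U (ball 0 1)
  lip : ∀ x ∈ ball (0 : E) 1, ∀ y ∈ ball (0 : E) 1, U x - U y - ⟪Z, x - y⟫ ≤ ‖x - y‖
  slope : Z = 0 ∨ 2 ≤ ‖Z‖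
  drift : ∀ P Q, ‖P - Z‖ ≤ 3 → ‖Q - Z‖ ≤ 3 → |g P - g Q| ≤ Λ * ‖P - Q‖

set_option maxHeartbeats 1000000 in
/-- A definite loss of slope along `h • e` at one point propagates to a whole ball, all smallness
conditions being explicit. -/
theorem IsFlatSolution.propagation_of_small {p A Λ : ℝ} (hA : CoeffBound E p A) {g U : E → ℝ}
    {Z : E} (hU : IsFlatSolution p Λ g U Z) (hΛ : 0 ≤ Λ) {h δ σ k η : ℝ} (hh : 0 < h)
    (hh' : h ≤ 1 / 8) (hσ : 0 < σ) (hσh : σ ≤ h / 4) (hσδ : σ ≤ δ / 8) (hk : 0 < k) (hη : 0 < η)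
    (hηδ : η ≤ δ / 2) (hησ : η ≤ σ / 8) (hηk : η * k ≤ 1 / 4)
    (hηC : 2 * A * (2 / h + 1 / (4 * σ)) * η * k ≤ 1)
    (hkσ : A * (Λ + 2 * A + 1) < 4 * k * σ ^ 2)
    {e y₁ : E} (he : ‖e‖ = 1) (hy₁ : ‖y₁‖ < 1 / 8)
    (hgap : U y₁ - U (y₁ - h • e) - ⟪Z, h • e⟫ ≤ h - δ) {x₀ : E} (hx₀ : ‖x₀‖ < 1 / 8) :
    U x₀ - U (x₀ - h • e) - ⟪Z, h • e⟫ ≤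
      h - η * (Real.exp (-(k / 16)) - Real.exp (-(k / 4))) := by
  set b : E → ℝ := fun x => Real.exp (-(k * ‖x - y₁‖ ^ 2)) with hb
  set F : E → ℝ := fun w => ⟪Z, w⟫ + 1 * ‖w‖ + η / σ ^ 2 * ‖w - h • e‖ ^ 2 with hFdef
  set G : E → ℝ := fun x => -η * b x with hGdef
  set b₀ := Real.exp (-(k / 4)) with hb₀
  set Φ : E × E → ℝ := fun z => U z.1 - U z.2 - F (z.1 - z.2) - G z.1 with hΦ
  set T := pairTube y₁ (h • e) (1 / 2) σ
  have hhe : ‖h • e‖ = h := by rw [norm_smul, he, mul_one, Real.norm_of_nonneg hh.le]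
  have hmem : ∀ z ∈ T, z.1 ∈ ball (0 : E) 1 ∧ z.2 ∈ ball (0 : E) 1 := by
    rintro ⟨x, y⟩ ⟨h1, h2⟩
    simp only at h1 h2
    have h3 : ‖x‖ < 5 / 8 := by
      calc ‖x‖ = ‖(x - y₁) + y₁‖ := by congr 1; abel
        _ ≤ _ := norm_add_le _ _
        _ < _ := by linarith
    have : ‖y‖ < 1 := by
      calc ‖y‖ = ‖x - (x - y - h • e) - h • e‖ := by congr 1; abel
        _ ≤ ‖x‖ + ‖x - y - h • e‖ + ‖h • e‖ :=
          (norm_sub_le _ _).trans (add_le_add_left (norm_sub_le _ _) _)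
        _ < _ := by rw [hhe]; linarith
    simp only [mem_ball, dist_zero_right]
    exact ⟨by linarith, this⟩
  have hUc := hU.solution.continuousOn
  have hcont : ContinuousOn Φ T := by
    have h1 : ContinuousOn (fun z : E × E => U z.1) T :=
      hUc.comp continuousOn_fst fun z hz => (hmem z hz).1
    have h2 : ContinuousOn (fun z : E × E => U z.2) T :=
      hUc.comp continuousOn_snd fun z hz => (hmem z hz).2
    have h3 : Continuous fun z : E × E => F (z.1 - z.2) := by fun_prop
    have h4 : Continuous fun z : E × E => G z.1 := by fun_prop
    exact ((h1.sub h2).sub h3.continuousOn).sub h4.continuousOn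
  have hx₀1 : ‖x₀ - y₁‖ ≤ 1 / 4 := (norm_sub_le _ _).trans (by linarith)
  have hT0 : (x₀, x₀ - h • e) ∈ T := ⟨by simp only; linarith, by simpa using hσ.le⟩
  obtain ⟨⟨x, y⟩, hxyT, hxymax⟩ :=
    (isCompact_pairTube y₁ (h • e) (1 / 2) σ).exists_isMaxOn ⟨_, hT0⟩ hcont
  by_cases hpos : Φ (x, y) ≤ η * b₀
  · have h1 : Φ (x₀, x₀ - h • e) ≤ Φ (x, y) := hxymax hT0
    simp only [hΦ, hFdef, hGdef, sub_sub_cancel, sub_self, norm_zero, hhe] at h1 hpos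
    have h2 : Real.exp (-(k / 16)) ≤ b x₀ := by
      refine Real.exp_le_exp.2 (neg_le_neg ?_)
      have := pow_le_pow_left₀ (norm_nonneg _) hx₀1 2
      nlinarith
    have h3 := mul_le_mul_of_nonneg_left h2 hη.le
    rw [mul_sub]
    linarith
  exfalso
  push Not at hpos
  have hxyb := hmem _ hxyT
  obtain ⟨hxR, hxy⟩ := hxyT
  simp only at hxR hxy hxyb
  set t := ‖x - y‖ with ht
  set r := ‖x - y₁‖ with hr
  set v := x - y - h • e with hv
  have hr0 : 0 ≤ r := norm_nonneg _
  have hpos' : η * b₀ < U x - U y - ⟪Z, x - y⟫ - t - η / σ ^ 2 * ‖v‖ ^ 2 + η * b x := by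
    simp only [hΦ, hFdef, hGdef] at hpos
    rw [← ht, ← hv] at hpos
    linarith
  have hlip := hU.lip x hxyb.1 y hxyb.2
  have hv2 : 0 ≤ η / σ ^ 2 * ‖v‖ ^ 2 := by positivity
  have hb0 : 0 < b x := Real.exp_pos _
  have hb1 : b x ≤ 1 := Real.exp_le_one_iff.2 (by have : 0 ≤ k * r ^ 2 := by positivity
                                                  linarith)
  have hb₀0 : 0 < b₀ := Real.exp_pos _
  have hrR : r < 1 / 2 := by
    have h1 : η * b₀ < η * b x := by linarith
    have h2 : b₀ < b x := lt_of_mul_lt_mul_left h1 hη.le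
    have h3 := Real.exp_lt_exp.1 h2
    by_contra! h4
    have := pow_le_pow_left₀ (by norm_num) h4 2
    rw [← hr] at h3
    nlinarith
  have hvσ : ‖v‖ < σ := by
    have h1 : η / σ ^ 2 * ‖v‖ ^ 2 < η * 1 := by nlinarith
    rw [div_mul_eq_mul_div, mul_div_assoc] at h1
    have h2 := lt_of_mul_lt_mul_left h1 hη.le
    rw [div_lt_one (by positivity)] at h2
    exact lt_of_pow_lt_pow_left₀ 2 hσ.le h2
  have hth : h - σ ≤ t := by
    have : h ≤ t + ‖v‖ := by
      calc h = ‖(x - y) - v‖ := by rw [hv, sub_sub_cancel, hhe]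
        _ ≤ _ := norm_sub_le _ _
    linarith
  have ht0 : 0 < t := by linarith
  have hσr : σ < r := by
    by_contra! h1
    have hy1b : y₁ ∈ ball (0 : E) 1 := by
      simp only [mem_ball, dist_zero_right]; linarith
    have hy1h : y₁ - h • e ∈ ball (0 : E) 1 := by
      simp only [mem_ball, dist_zero_right]
      have := norm_sub_le y₁ (h • e)
      linarith
    have h2 := hU.lip x hxyb.1 y₁ hy1b
    have h3 := hU.lip (y₁ - h • e) hy1h y hxyb.2
    have h4 : ‖y₁ - h • e - y‖ ≤ r + ‖v‖ := by
      calc ‖y₁ - h • e - y‖ = ‖v - (x - y₁)‖ := by rw [hv]; congr 1; abel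
        _ ≤ _ := (norm_sub_le _ _).trans (by rw [add_comm])
    have h5 : ⟪Z, x - y⟫ = ⟪Z, x - y₁⟫ + ⟪Z, y₁ - h • e - y⟫ + ⟪Z, h • e⟫ := by
      rw [← inner_add_right, ← inner_add_right]; congr 1; abel
    have h6 : η * b x ≤ η * 1 := by gcongr
    have h7 : 0 < η * b₀ := by positivity
    linarith
  have hloc : IsLocalMax Φ (x, y) :=
    hxymax.isLocalMax (pairTube_mem_nhds hrR hvσ)
  have hw0 : x - y ≠ 0 := norm_pos_iff.1 ht0
  set n := ‖x - y‖⁻¹ • (x - y) with hn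
  have hn1 : ‖n‖ = 1 := norm_inv_smul_self hw0
  set w := n + (η / σ ^ 2) • ((2 : ℝ) • v) with hw
  have hwn : ‖w - n‖ ≤ 1 / 4 := by
    rw [hw, add_sub_cancel_left, smul_smul, norm_smul, Real.norm_of_nonneg (by positivity)]
    calc η / σ ^ 2 * 2 * ‖v‖ ≤ (σ / 8) / σ ^ 2 * 2 * σ := by gcongr
      _ = 1 / 4 := by field_simp; norm_num
  have hw1 : 3 / 4 ≤ ‖w‖ := by
    have := norm_sub_le w (w - n)
    rw [sub_sub_cancel, hn1] at this
    linarith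
  have hw2 : ‖w‖ ≤ 5 / 4 := by
    have := norm_add_le (w - n) n
    rw [sub_add_cancel, hn1] at this
    linarith
  set Q := Z + w with hQdef
  have hQρ : 3 / 4 ≤ ‖Q‖ := by
    rcases hU.slope with h1 | h1
    · rw [hQdef, h1, zero_add]; exact hw1
    · have := norm_sub_le Q w
      rw [hQdef, add_sub_cancel_right, ← hQdef] at this
      linarith
  have hQ : Q ≠ 0 := norm_pos_iff.1 (by linarith)
  set K := (-η) • (-(2 * k * b x) • (x - y₁)) with hKdef
  have hKn : ‖K‖ = 2 * η * k * b x * r := by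
    rw [hKdef, smul_smul, norm_smul, neg_mul_neg, Real.norm_of_nonneg (by positivity)]; ring
  have hKb : ‖K‖ ≤ η * k * b x := by
    rw [hKn]
    have : 0 ≤ η * k * b x := by positivity
    nlinarith
  have hK4 : ‖K‖ ≤ 1 / 4 := by
    have : η * k * b x ≤ η * k * 1 := by gcongr
    linarith
  have hQK : Q + K ≠ 0 := by
    intro h0
    have : ‖Q‖ = ‖K‖ := by rw [eq_neg_of_add_eq_zero_left h0, norm_neg]
    linarith
  have hF : HasGradientAt F Q (x - y) := by
    have := (((hasGradientAt_inner Z (x - y)).fun_add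
      ((hasGradientAt_norm hw0).fun_const_mul 1)).fun_add
      ((hasGradientAt_norm_sub_sq (h • e) (x - y)).fun_const_mul (η / σ ^ 2)))
    have hQ' : Z + (1 : ℝ) • n + (η / σ ^ 2) • ((2 : ℝ) • v) = Q := by
      rw [hQdef, hw, one_smul, add_assoc]
    rwa [← hn, ← hv, hQ'] at this
  have hG : HasGradientAt G K x := (hasGradientAt_exp_norm_sq k y₁ x).fun_const_mul (-η)
  have hF2 : ∀ ξ, HasTaylorTwo (fun s => F (x - y + s • ξ)) ⟪Q, ξ⟫
      ((‖ξ‖ ^ 2 - ⟪n, ξ⟫ ^ 2) / t + 2 * (η / σ ^ 2) * ‖ξ‖ ^ 2) := by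
    intro ξ
    refine (((HasTaylorTwo.inner_line Z (x - y) ξ).add
      ((HasTaylorTwo.norm_line hw0 ξ).const_mul 1)).add
      ((HasTaylorTwo.norm_sq v ξ).const_mul (η / σ ^ 2))).congr (fun s => ?_) ?_ ?_
    · simp only [hFdef, hv]
      congr 4
      abel
    · change ⟪Z, ξ⟫ + 1 * ⟪n, ξ⟫ + η / σ ^ 2 * (2 * ⟪v, ξ⟫) = _
      rw [hQdef, hw, inner_add_left, inner_add_left, real_inner_smul_left ((2 : ℝ) • v),
        real_inner_smul_left v]
      ring
    · rw [← hn, ← ht]; ring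
  have hG2 : ∀ ξ, HasTaylorTwo (fun s => G (x + s • ξ)) ⟪K, ξ⟫
      (-η * (b x * (4 * k ^ 2 * ⟪x - y₁, ξ⟫ ^ 2 - 2 * k * ‖ξ‖ ^ 2))) := by
    intro ξ
    refine ((HasTaylorTwo.exp_norm_sq k (x - y₁) ξ).const_mul (-η)).congr (fun s => ?_) ?_ rfl
    · simp only [hGdef, hb]
      congr 6
      abel
    · rw [hKdef, real_inner_smul_left, real_inner_smul_left]
      ring
  have key := hU.solution.doubling hxyb.1 hxyb.2 hloc hF hG hF2 hG2 hQ hQK (Or.inl rfl)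
  simp only [inner_zero_left, mul_zero, zero_smul, sub_zero] at key
  have hA0 : 0 < A := one_pos.trans_le hA.one_le
  have hlow : -(Λ * (η * k * b x)) ≤ g (Q + K) - g Q := by
    have h1 : ‖Q + K - Z‖ ≤ 3 := by
      have := norm_add_le w K
      rw [hQdef, add_assoc, add_sub_cancel_left]
      linarith
    have h2 : ‖Q - Z‖ ≤ 3 := by
      rw [hQdef, add_sub_cancel_left]
      linarith
    have h3 := (abs_le.1 (hU.drift (Q + K) Q h1 h2)).1
    rw [add_sub_cancel_left] at h3
    have h4 := mul_le_mul_of_nonneg_left hKb hΛ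
    linarith
  set d : Fin (Module.finrank ℝ E) → E := fun i =>
    coeffSqrt p (Q + K) (stdOrthonormalBasis ℝ E i) - coeffSqrt p Q (stdOrthonormalBasis ℝ E i)
    with hd
  have hD : ∑ i, ‖d i‖ ^ 2 ≤ 2 * A * (η * k) ^ 2 * b x := by
    have h1 := hA.lipschitz (Q + K) Q hQK hQ
    rw [add_sub_cancel_left] at h1
    refine h1.trans ?_
    rw [div_pow]
    have h2 : ‖K‖ ^ 2 / ‖Q‖ ^ 2 ≤ (η * k * b x) ^ 2 / (3 / 4) ^ 2 := by gcongr
    have h3 : b x ^ 2 ≤ b x := by nlinarith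
    have h4 : (η * k * b x) ^ 2 / (3 / 4) ^ 2 ≤ 2 * ((η * k) ^ 2 * b x) := by
      have : 0 ≤ (η * k) ^ 2 * b x := by positivity
      have h5 := mul_le_mul_of_nonneg_left h3 (sq_nonneg (η * k))
      rw [mul_pow, div_le_iff₀ (by norm_num)]
      linarith
    calc A * (‖K‖ ^ 2 / ‖Q‖ ^ 2) ≤ A * (2 * ((η * k) ^ 2 * b x)) := by gcongr; linarith
      _ = _ := by ring
  set C := 2 / h + 1 / (4 * σ) with hC
  have hC0 : 0 < C := by positivity
  have hsumF : ∑ i, ((‖d i‖ ^ 2 - ⟪n, d i⟫ ^ 2) / t + 2 * (η / σ ^ 2) * ‖d i‖ ^ 2) ≤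
      C * ∑ i, ‖d i‖ ^ 2 := by
    rw [Finset.mul_sum]
    refine Finset.sum_le_sum fun i _ => ?_
    have h1 : (‖d i‖ ^ 2 - ⟪n, d i⟫ ^ 2) / t ≤ ‖d i‖ ^ 2 / (h / 2) := by
      gcongr
      · have := sq_nonneg ⟪n, d i⟫
        linarith
      · linarith
    have h2 : 2 * (η / σ ^ 2) ≤ 2 * (σ / 8 / σ ^ 2) := by gcongr
    have h3 : 2 * (σ / 8 / σ ^ 2) = 1 / (4 * σ) := by field_simp; norm_num
    have h4 : ‖d i‖ ^ 2 / (h / 2) = 2 / h * ‖d i‖ ^ 2 := by field_simp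
    rw [h3] at h2
    have h5 := mul_le_mul_of_nonneg_right h2 (sq_nonneg ‖d i‖)
    rw [hC, add_mul]
    linarith
  have hsumG : ∑ i, -η * (b x * (4 * k ^ 2 *
      ⟪x - y₁, coeffSqrt p (Q + K) (stdOrthonormalBasis ℝ E i)⟫ ^ 2 -
      2 * k * ‖coeffSqrt p (Q + K) (stdOrthonormalBasis ℝ E i)‖ ^ 2)) ≤
      -η * (b x * (4 * k ^ 2 * (σ ^ 2 / A) - 2 * k * A)) := by
    rw [← Finset.mul_sum, ← Finset.mul_sum, Finset.sum_sub_distrib, ← Finset.mul_sum,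
      ← Finset.mul_sum]
    have h1 := hA.lower (Q + K) (x - y₁) hQK
    have h2 := hA.upper (Q + K)
    have h3 : σ ^ 2 / A ≤
        ∑ i, ⟪x - y₁, coeffSqrt p (Q + K) (stdOrthonormalBasis ℝ E i)⟫ ^ 2 := by
      rw [div_le_iff₀ hA0, mul_comm]
      refine le_trans ?_ h1
      exact pow_le_pow_left₀ hσ.le hσr.le 2
    rw [neg_mul, neg_mul, neg_le_neg_iff]
    gcongr
  have h1 : C * ∑ i, ‖d i‖ ^ 2 ≤ η * k * b x := by
    calc C * ∑ i, ‖d i‖ ^ 2 ≤ C * (2 * A * (η * k) ^ 2 * b x) := by gcongr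
      _ = (2 * A * C * η * k) * (η * k * b x) := by ring
      _ ≤ 1 * (η * k * b x) := by gcongr
      _ = _ := one_mul _
  have h2 : 0 ≤ η * k * b x * (Λ + 1 + 2 * A - 4 * k * (σ ^ 2 / A)) := by
    have h3 : g (Q + K) - g Q ≤ η * k * b x +
        -η * (b x * (4 * k ^ 2 * (σ ^ 2 / A) - 2 * k * A)) :=
      key.trans (add_le_add (hsumF.trans h1) hsumG)
    linarith
  have h3 : 0 ≤ Λ + 1 + 2 * A - 4 * k * (σ ^ 2 / A) := by
    by_contra! h4
    have : 0 < η * k * b x := by positivity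
    nlinarith
  have h4 : 4 * k * (σ ^ 2 / A) * A = 4 * k * σ ^ 2 := by field_simp
  nlinarith

/-- A definite loss of slope along `h • e` at one point propagates to a whole ball. -/
theorem CoeffBound.exists_propagation {p A : ℝ} (hA : CoeffBound E p A) {Λ h δ : ℝ} (hΛ : 0 ≤ Λ)
    (hh : 0 < h) (hh' : h ≤ 1 / 8) (hδ : 0 < δ) :
    ∃ η > 0, ∀ (g U : E → ℝ) (Z : E), IsFlatSolution p Λ g U Z →
      ∀ e y₁ : E, ‖e‖ = 1 → ‖y₁‖ < 1 / 8 → U y₁ - U (y₁ - h • e) - ⟪Z, h • e⟫ ≤ h - δ →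
        ∀ x : E, ‖x‖ < 1 / 8 → U x - U (x - h • e) - ⟪Z, h • e⟫ ≤ h - η := by
  have hA1 := hA.one_le
  have hA0 : 0 < A := by linarith
  set σ := min (δ / 8) (h / 4)
  have hσ : 0 < σ := lt_min (by positivity) (by positivity)
  set k := A * (Λ + 2 * A + 1) / σ ^ 2 with hk
  have hk0 : 0 < k := by positivity
  set C := 2 / h + 1 / (4 * σ)
  have hC : 0 < C := by positivity
  set η := min (min (δ / 2) (σ / 8)) (min (1 / (4 * k)) (1 / (2 * A * C * k)))
  have hη : 0 < η :=
    lt_min (lt_min (by positivity) (by positivity)) (lt_min (by positivity) (by positivity))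
  refine ⟨η * (Real.exp (-(k / 16)) - Real.exp (-(k / 4))),
    mul_pos hη (sub_pos.2 (Real.exp_lt_exp.2 (by linarith))), ?_⟩
  intro g U Z hU e y₁ he hy₁ hgap x hx
  refine hU.propagation_of_small hA hΛ hh hh' hσ (min_le_right _ _) (min_le_left _ _) hk0 hη
    ((min_le_left _ _).trans (min_le_left _ _)) ((min_le_left _ _).trans (min_le_right _ _))
    ?_ ?_ ?_ he hy₁ hgap hx
  · have h1 : η ≤ 1 / (4 * k) := (min_le_right _ _).trans (min_le_left _ _)
    rw [le_div_iff₀ (by positivity)] at h1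
    linarith
  · have h1 : η ≤ 1 / (2 * A * C * k) := (min_le_right _ _).trans (min_le_right _ _)
    rw [le_div_iff₀ (by positivity)] at h1
    linarith
  · have h1 : k * σ ^ 2 = A * (Λ + 2 * A + 1) := by rw [hk]; field_simp
    have h2 : 0 < A * (Λ + 2 * A + 1) := by positivity
    rw [mul_assoc, h1]
    linarith

end Propagation

section ImprovementOfFlatness

variable {E : Type*} [NormedAddCommGroup E] [InnerProductSpace ℝ E]

theorem norm_add_smul_le {e : E} (he : ‖e‖ = 1) {h : ℝ} (hh : 0 < h) (ξ : E) :
    ‖ξ + h • e‖ ≤ h + ⟪e, ξ⟫ + ‖ξ‖ ^ 2 / (2 * h) := by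
  have h1 : ‖ξ + h • e‖ ^ 2 = ‖ξ‖ ^ 2 + 2 * h * ⟪e, ξ⟫ + h ^ 2 := by
    rw [norm_add_sq_real, inner_smul_right, norm_smul, he, real_inner_comm,
      Real.norm_of_nonneg hh.le]
    ring
  have h2 : 0 ≤ (‖ξ + h • e‖ - h) ^ 2 := sq_nonneg _
  have h3 : h + ⟪e, ξ⟫ + ‖ξ‖ ^ 2 / (2 * h) - ‖ξ + h • e‖ =
      (‖ξ + h • e‖ - h) ^ 2 / (2 * h) := by
    field_simp
    linear_combination -h1
  have h4 : 0 ≤ (‖ξ + h • e‖ - h) ^ 2 / (2 * h) := by positivity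
  linarith

theorem exists_unit_smul {h : ℝ} (hh : 0 < h) {w : E} (hw : ‖w‖ = h) :
    ∃ e : E, ‖e‖ = 1 ∧ w = h • e := by
  refine ⟨h⁻¹ • w, ?_, by rw [smul_smul, mul_inv_cancel₀ hh.ne', one_smul]⟩
  rw [norm_smul, norm_inv, hw, Real.norm_of_nonneg hh.le, inv_mul_cancel₀ hh.ne']

variable [FiniteDimensional ℝ E]

theorem mem_ball_of_norm_sub_le {x₀ x : E} {a b c : ℝ} (h₀ : ‖x₀‖ < a) (h : ‖x - x₀‖ ≤ b)
    (hab : a + b ≤ c) : ‖x‖ < c := by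
  have := norm_add_le (x - x₀) x₀
  rw [sub_add_cancel] at this
  linarith

theorem IsFlatSolution.lipschitz_of_aligned {p A Λ : ℝ} (hA : CoeffBound E p A) {g U : E → ℝ}
    {Z : E} (hU : IsFlatSolution p Λ g U Z) (hΛ : 0 ≤ Λ) {h ρ : ℝ} (hh : 0 < h) (hh' : h ≤ 1 / 8)
    (hρ : 0 < ρ) (hρh : ρ ≤ h / 80) (hρA : 8 * A * (Λ + 5 * A) * ρ < h)
    {e : E} (he : ‖e‖ = 1)
    (hgap : ∀ x : E, ‖x‖ < 1 / 8 → h - ρ ^ 2 / (2 * h) ≤ U x - U (x - h • e) - ⟪Z, h • e⟫)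
    {x₀ y₀ : E} (hx₀ : ‖x₀‖ < ρ) (hy₀ : ‖x₀ - y₀‖ ≤ ρ) :
    U x₀ - U y₀ - ⟪Z + e, x₀ - y₀⟫ ≤ 1 / 4 * ‖x₀ - y₀‖ := by
  have hA1 := hA.one_le
  have hhe : ‖h • e‖ = h := by rw [norm_smul, he, mul_one, Real.norm_of_nonneg hh.le]
  have hball : ∀ x : E, ‖x‖ < 1 → x ∈ ball (0 : E) 1 := fun x hx => by simpa using hx
  have hyb : ∀ x y : E, ‖x - x₀‖ ≤ ρ → ‖x - y‖ ≤ ρ → ‖x‖ < 1 / 8 ∧ ‖y‖ < 1 / 8 := by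
    intro x y h1 h2
    have h3 : ‖x‖ < 2 * ρ := mem_ball_of_norm_sub_le hx₀ h1 (by linarith)
    refine ⟨by linarith, mem_ball_of_norm_sub_le (b := ρ) h3 ?_ (by linarith)⟩
    rwa [norm_sub_rev]
  have hosc : ∀ x y : E, ‖x - x₀‖ ≤ ρ → ‖x - y‖ ≤ ρ →
      U x - U y - ⟪Z + e, x - y⟫ ≤ ρ ^ 2 / h := by
    intro x y h1 h2
    obtain ⟨hx, hy⟩ := hyb x y h1 h2
    have h3 := hgap y hy
    have h4 : ‖y - h • e‖ < 1 := by
      have := norm_sub_le y (h • e)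
      linarith
    have h5 := hU.lip x (hball x (by linarith)) (y - h • e) (hball _ h4)
    have h6 := norm_add_smul_le he hh (x - y)
    rw [show x - (y - h • e) = x - y + h • e by abel, inner_add_right] at h5
    have h7 : ‖x - y‖ ^ 2 / (2 * h) ≤ ρ ^ 2 / (2 * h) := by gcongr
    have h8 : ρ ^ 2 / h = ρ ^ 2 / (2 * h) + ρ ^ 2 / (2 * h) := by field_simp; ring
    rw [inner_add_left]
    linarith
  have hρh2 : ρ ^ 2 / h ≤ ρ / 80 := by
    rw [div_le_iff₀ hh]; nlinarith
  refine hU.solution.mono ?_ |>.doubling_lipschitz hA (R := ρ) (h := ρ) (L := 1 / 4)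
    (m := 1 / (8 * ρ)) (κ := 1 / h) (ρ := 1 / 2) (M := 2) (Λ := Λ) hρ (by norm_num)
    (by positivity) (by positivity) (by norm_num) hΛ ?_ ?_ ?_ ?_ ?_ ?_ ?_ ?_ hy₀
  · intro x hx
    rw [mem_closedBall, dist_eq_norm] at hx
    exact hball x (mem_ball_of_norm_sub_le hx₀ hx (by linarith))
  · rw [div_mul_eq_mul_div, div_le_iff₀ (by positivity)]; linarith
  · intro x y h1 h2
    obtain ⟨hx, hy⟩ := hyb x y h1 h2
    have h3 := hU.lip x (hball x (by linarith)) y (hball y (by linarith))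
    have h4 := neg_le_of_abs_le (abs_real_inner_le_norm e (x - y))
    rw [he, one_mul] at h4
    rw [inner_add_left]
    linarith
  · intro x y h1 h2
    have h3 := hosc x y h1 h2
    have h4 : 1 / (8 * ρ) / 2 * ‖x - y‖ ^ 2 ≤ 1 / 4 * ‖x - y‖ := by
      have : 1 / (8 * ρ) / 2 * ‖x - y‖ ^ 2 = ‖x - y‖ / 16 * (‖x - y‖ / ρ) := by
        field_simp; ring
      rw [this]
      have h5 : ‖x - y‖ / ρ ≤ 1 := (div_le_one hρ).2 h2
      have := norm_nonneg (x - y)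
      nlinarith
    have h5 : 1 / h * ρ ^ 2 = ρ ^ 2 / h := by ring
    linarith
  · intro x y h1 h2
    have h3 := hosc x y h1 h2.le
    have h4 : 1 / (8 * ρ) / 2 * ρ ^ 2 = ρ / 16 := by field_simp; norm_num
    linarith
  · intro w _ hw
    have h1 : 1 ≤ ‖Z + e‖ := by
      rcases hU.slope with h2 | h2
      · rw [h2, zero_add, he]
      · have := norm_sub_le (Z + e) e
        rw [add_sub_cancel_right] at this
        linarith
    have := norm_sub_le (Z + e + w) w
    rw [add_sub_cancel_right] at this
    linarith
  · have : ρ / h ≤ 1 / 80 := by rw [div_le_iff₀ hh]; linarith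
    have h2 : 2 * (1 / h) * ρ = 2 * (ρ / h) := by ring
    linarith
  · intro w K _ hw hK
    have : ρ / h ≤ 1 / 80 := by rw [div_le_iff₀ hh]; linarith
    have h2 : 2 * (1 / h) * ρ = 2 * (ρ / h) := by ring
    have h3 := norm_add_le e w
    have h4 := norm_add_le (e + w) K
    have h5 := hU.drift (Z + e + w) (Z + e + w + K)
      (by rw [add_assoc, add_sub_cancel_left]; linarith)
      (by rw [add_assoc, add_assoc, add_sub_cancel_left, ← add_assoc]; linarith)
    rw [sub_add_cancel_left, norm_neg] at h5
    exact (le_abs_self _).trans h5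
  · have h1 : A * (2 * (1 / h) * ρ * Λ + 2 * (1 / h) * A + 4 * A * (1 / 4) * (1 / h) * 2 /
        (1 / 2) ^ 2) = 2 * A * (ρ * Λ + 5 * A) / h := by field_simp; ring
    have h2 : 2 * (1 / (8 * ρ)) = 1 / (4 * ρ) := by field_simp; norm_num
    rw [h1, h2, div_lt_div_iff₀ hh (by positivity)]
    have h3 : ρ * Λ ≤ 1 * Λ := by gcongr; linarith
    have h4 : 2 * A * (ρ * Λ + 5 * A) ≤ 2 * A * (1 * Λ + 5 * A) := by gcongr
    have h5 := mul_le_mul_of_nonneg_right h4 (show 0 ≤ 4 * ρ by linarith)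
    linarith

theorem IsFlatSolution.lipschitz_of_loss {p A Λ : ℝ} (hA : CoeffBound E p A) {g U : E → ℝ}
    {Z : E} (hU : IsFlatSolution p Λ g U Z) (hΛ : 0 ≤ Λ) {h η : ℝ} (hh : 0 < h) (hh' : h ≤ 1 / 256)
    (hhA : 10000 * A * (Λ + A) * h ^ 2 < 1) (hη : 0 < η) (hη' : η ≤ 1 / 4)
    (hgap : ∀ e x : E, ‖e‖ = 1 → ‖x‖ < 1 / 8 → U x - U (x - h • e) - ⟪Z, h • e⟫ ≤ h - h * η)
    {x₀ y₀ : E} (hx₀ : ‖x₀‖ < 1 / 32) (hy₀ : ‖x₀ - y₀‖ ≤ h) :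
    U x₀ - U y₀ - ⟪Z, x₀ - y₀⟫ ≤ (1 - η / 2) * ‖x₀ - y₀‖ := by
  have hA1 := hA.one_le
  have hball : ∀ x : E, ‖x‖ < 1 → x ∈ ball (0 : E) 1 := fun x hx => by simpa using hx
  have hyb : ∀ x y : E, ‖x - x₀‖ ≤ 1 / 16 → ‖x - y‖ ≤ h → ‖x‖ < 1 / 8 ∧ ‖y‖ < 1 := by
    intro x y h1 h2
    have h3 : ‖x‖ < 1 / 8 := mem_ball_of_norm_sub_le hx₀ h1 (by norm_num)
    refine ⟨by linarith, mem_ball_of_norm_sub_le (b := h) h3 ?_ (by linarith)⟩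
    rwa [norm_sub_rev]
  have hlip : ∀ x y : E, ‖x - x₀‖ ≤ 1 / 16 → ‖x - y‖ ≤ h →
      U x - U y - ⟪Z, x - y⟫ ≤ 1 * ‖x - y‖ := by
    intro x y h1 h2
    obtain ⟨hx, hy⟩ := hyb x y h1 h2
    rw [one_mul]
    exact hU.lip x (hball x (by linarith)) y (hball y (by linarith))
  have hhη : h * η ≤ 1 / 256 * (1 / 4) := by gcongr
  have hhη0 : 0 < h * η := by positivity
  refine hU.solution.mono ?_ |>.doubling_lipschitz hA (R := 1 / 16) (h := h) (L := 1 - η / 2)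
    (m := η / h) (κ := 256 * h * η) (ρ := 1 / 4) (M := 1) (Λ := Λ) (by norm_num) (by linarith)
    (by positivity) (by positivity) (by norm_num) hΛ ?_ hlip ?_ ?_ ?_ ?_ ?_ ?_ hy₀
  · intro x hx
    rw [mem_closedBall, dist_eq_norm] at hx
    exact hball x (mem_ball_of_norm_sub_le hx₀ hx (by linarith))
  · rw [div_mul_cancel₀ _ hh.ne']; linarith
  · intro x y h1 h2
    have h3 := hlip x y h1 h2
    have h4 : η / h / 2 * ‖x - y‖ ^ 2 ≤ η / 2 * h := by
      have : η / h / 2 * ‖x - y‖ ^ 2 ≤ η / h / 2 * h ^ 2 := by gcongr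
      refine this.trans (le_of_eq ?_)
      field_simp
    have h5 : η * ‖x - y‖ ≤ η * h := by gcongr
    linarith
  · intro x y h1 h2
    obtain ⟨hx, hy⟩ := hyb x y h1 h2.le
    obtain ⟨e, he, hxy⟩ := exists_unit_smul hh h2
    have h3 := hgap e x he hx
    rw [← hxy, sub_sub_cancel] at h3
    have h4 : η / h / 2 * h ^ 2 = h * η / 2 := by field_simp
    linarith
  · intro w hw1 hw2
    rcases hU.slope with h2 | h2
    · rw [h2, zero_add]; linarith
    · have := norm_sub_le (Z + w) w
      rw [add_sub_cancel_right] at this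
      linarith
  · linarith
  · intro w K _ hw hK
    have h4 := norm_add_le w K
    have h5 := hU.drift (Z + w) (Z + w + K)
      (by rw [add_sub_cancel_left]; linarith)
      (by rw [add_assoc, add_sub_cancel_left]; linarith)
    rw [sub_add_cancel_left, norm_neg] at h5
    exact (le_abs_self _).trans h5
  · have h1 : 4 * A * (1 - η / 2) * (256 * h * η) * 1 / (1 / 4) ^ 2 ≤
        4 * A * 1 * (256 * h * η) * 1 / (1 / 4) ^ 2 := by gcongr; linarith
    have h2 : A * (2 * (256 * h * η) * (1 / 16) * Λ + 2 * (256 * h * η) * A +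
        4 * A * (1 - η / 2) * (256 * h * η) * 1 / (1 / 4) ^ 2) ≤
        A * (2 * (256 * h * η) * (1 / 16) * Λ + 2 * (256 * h * η) * A +
        4 * A * 1 * (256 * h * η) * 1 / (1 / 4) ^ 2) := by gcongr
    refine h2.trans_lt ?_
    have h3 : A * (2 * (256 * h * η) * (1 / 16) * Λ + 2 * (256 * h * η) * A +
        4 * A * 1 * (256 * h * η) * 1 / (1 / 4) ^ 2) ≤ η * h * (20000 * A * (Λ + A)) := by
      rw [show ((1 : ℝ) / 4) ^ 2 = 1 / 16 by norm_num]
      have h4 : 0 ≤ η * h * (A * Λ) := by positivity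
      have h5 : 0 ≤ η * h * (A * A) := by positivity
      linarith
    refine h3.trans_lt ?_
    rw [mul_div_assoc', lt_div_iff₀ hh]
    have h6 := mul_lt_mul_of_pos_left hhA hη
    linarith

/-- Improvement of flatness: at a smaller scale the slope bound is reduced by a fixed factor, after
changing the linear function if necessary. -/
theorem CoeffBound.exists_improvement {p A : ℝ} (hA : CoeffBound E p A) {Λ : ℝ} (hΛ : 0 ≤ Λ) :
    ∃ r ∈ Ioo (0 : ℝ) 1, ∃ θ ∈ Ioo (0 : ℝ) 1, ∀ (g U : E → ℝ) (Z : E), IsFlatSolution p Λ g U Z →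
      ∃ (Z' : E) (ε : ℝ), 0 < ε ∧ ε ≤ θ ∧ (Z' = 0 ∨ 2 * ε ≤ ‖Z'‖) ∧
        ∀ x ∈ ball (0 : E) r, ∀ y ∈ ball (0 : E) r, U x - U y - ⟪Z', x - y⟫ ≤ ε * ‖x - y‖ := by
  have hA1 := hA.one_le
  set h := 1 / (256 * A * (Λ + A)) with hh
  have hAΛ : 1 ≤ A * (Λ + A) := by nlinarith
  have hh0 : 0 < h := by positivity
  have hhA : h * (A * (Λ + A)) = 1 / 256 := by rw [hh]; field_simp
  have hh1 : h ≤ 1 / 256 := by nlinarith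
  set ρ := h / (80 * A * (Λ + A)) with hρ
  have hρ0 : 0 < ρ := by positivity
  have hρA : ρ * (A * (Λ + A)) = h / 80 := by rw [hρ]; field_simp
  have hρ1 : ρ ≤ h / 80 := by nlinarith
  obtain ⟨η₀, hη₀, hprop⟩ := hA.exists_propagation hΛ hh0 (by linarith)
    (show 0 < ρ ^ 2 / (2 * h) by positivity)
  set η := min (η₀ / h) (1 / 4)
  have hη : 0 < η := lt_min (by positivity) (by norm_num)
  have hη1 : η ≤ 1 / 4 := min_le_right _ _
  have hη2 : h * η ≤ η₀ := by
    have : η ≤ η₀ / h := min_le_left _ _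
    rwa [le_div_iff₀ hh0, mul_comm] at this
  refine ⟨ρ / 2, ⟨by positivity, by linarith⟩, 1 - η / 2, ⟨by linarith, by linarith⟩, ?_⟩
  intro g U Z hU
  have hball : ∀ x ∈ ball (0 : E) (ρ / 2), ∀ y ∈ ball (0 : E) (ρ / 2),
      ‖x‖ < ρ / 2 ∧ ‖x - y‖ ≤ ρ := by
    intro x hx y hy
    rw [mem_ball, dist_zero_right] at hx hy
    exact ⟨hx, (norm_sub_le _ _).trans (by linarith)⟩
  by_cases hcase : ∃ e : E, ‖e‖ = 1 ∧ ∀ x : E, ‖x‖ < 1 / 8 →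
      h - ρ ^ 2 / (2 * h) ≤ U x - U (x - h • e) - ⟪Z, h • e⟫
  · obtain ⟨e, he, hgap⟩ := hcase
    refine ⟨Z + e, 1 / 4, by norm_num, by linarith, Or.inr ?_, fun x hx y hy => ?_⟩
    · rcases hU.slope with h2 | h2
      · rw [h2, zero_add, he]; norm_num
      · have := norm_sub_le (Z + e) e
        rw [add_sub_cancel_right] at this
        linarith
    · obtain ⟨h1, h2⟩ := hball x hx y hy
      refine hU.lipschitz_of_aligned hA hΛ hh0 (by linarith) hρ0 hρ1 ?_ he hgap (by linarith) h2
      nlinarith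
  · push Not at hcase
    refine ⟨Z, 1 - η / 2, by linarith, le_rfl, ?_, fun x hx y hy => ?_⟩
    · exact hU.slope.imp_right fun h2 => by linarith
    · obtain ⟨h1, h2⟩ := hball x hx y hy
      refine hU.lipschitz_of_loss hA hΛ hh0 hh1 ?_ hη hη1 ?_ (by linarith) (by linarith)
      · have : 10000 * A * (Λ + A) * h ^ 2 = 10000 * h * (h * (A * (Λ + A))) := by ring
        rw [this, hhA]
        linarith
      · intro e x he hx
        obtain ⟨y₁, hy₁, hlt⟩ := hcase e he
        have := hprop g U Z hU e y₁ he hy₁ hlt.le x hx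
        linarith

end ImprovementOfFlatness

section Iteration

variable {E : Type*} [NormedAddCommGroup E] [InnerProductSpace ℝ E] [FiniteDimensional ℝ E]

theorem HasGradientAt.comp_affine {U : E → ℝ} {x₀ y P : E} {ρ : ℝ} (c : ℝ)
    (hP : HasGradientAt U P (x₀ + ρ • y)) :
    HasGradientAt (fun z => c * U (x₀ + ρ • z)) ((c * ρ) • P) y := by
  have h1 : HasFDerivAt (fun z : E => x₀ + ρ • z) (ρ • ContinuousLinearMap.id ℝ E) y :=
    ((hasFDerivAt_id y).const_smul ρ).const_add x₀
  have h2 := (hP.hasFDerivAt.comp y h1).const_mul c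
  refine hasGradientAt_of_hasFDerivAt h2 fun ξ => ?_
  simp [inner_smul_left]
  ring

theorem IsNondivSolution.rescale {p : ℝ} {g U : E → ℝ} {S T : Set E}
    (hU : IsNondivSolution p g U S) (x₀ : E) {c ρ : ℝ} (hc : 0 < c) (hρ : 0 < ρ)
    (hT : ∀ y ∈ T, x₀ + ρ • y ∈ S) :
    IsNondivSolution p (fun P => c * ρ ^ 2 * g ((c * ρ)⁻¹ • P)) (fun y => c * U (x₀ + ρ • y)) T := by
  intro y hy
  obtain ⟨P, hP, hH⟩ := hU _ (hT y hy)
  have hcρ : 0 < c * ρ := mul_pos hc hρ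
  refine ⟨(c * ρ) • P, hP.comp_affine c, fun hP0 => ?_⟩
  obtain ⟨H, hT, hE⟩ := hH fun h => hP0 (by rw [h, smul_zero])
  refine ⟨(c * ρ ^ 2) • H, fun ξ => ?_, ?_⟩
  · refine ((hT (ρ • ξ)).const_mul c).congr (fun s => ?_) ?_ ?_
    · congr 2
      module
    · rw [real_inner_smul_right, real_inner_smul_left]; ring
    · simp only [map_smul, LinearMap.smul_apply, smul_eq_mul]; ring
  · change _ = c * ρ ^ 2 * g ((c * ρ)⁻¹ • (c * ρ) • P)
    rw [smul_smul, inv_mul_cancel₀ hcρ.ne', one_smul, ← hE, Finset.mul_sum]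
    refine Finset.sum_congr rfl fun i _ => ?_
    rw [coeffSqrt_pos_smul p hcρ]
    simp

theorem HasGradientAt.norm_sub_le {U : E → ℝ} {P Z x : E} {ε : ℝ} {S : Set E}
    (hP : HasGradientAt U P x) (hε : 0 ≤ ε) (hS : S ∈ 𝓝 x)
    (hlip : ∀ y ∈ S, ∀ z ∈ S, U y - U z - ⟪Z, y - z⟫ ≤ ε * ‖y - z‖) : ‖P - Z‖ ≤ ε := by
  have h1 : HasFDerivAt (fun y => U y - ⟪Z, y⟫) (InnerProductSpace.toDual ℝ E (P - Z)) x := by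
    rw [map_sub]
    exact hP.hasFDerivAt.sub (hasGradientAt_inner Z x).hasFDerivAt
  rw [← (InnerProductSpace.toDual ℝ E).norm_map]
  refine h1.le_of_lip' hε ?_
  have hx : x ∈ S := mem_of_mem_nhds hS
  filter_upwards [hS] with y hy
  have h2 := hlip y hy x hx
  have h3 := hlip x hx y hy
  rw [inner_sub_right] at h2 h3
  rw [norm_sub_rev x y] at h3
  rw [Real.norm_eq_abs, abs_le]
  constructor <;> linarith

theorem flatness_iteration {p Λ r θ : ℝ} (hΛ : 0 ≤ Λ) (hr : r ∈ Ioo (0 : ℝ) 1)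
    (hθ : θ ∈ Ioo (0 : ℝ) 1)
    (himp : ∀ (g U : E → ℝ) (Z : E), IsFlatSolution p Λ g U Z →
      ∃ (Z' : E) (ε : ℝ), 0 < ε ∧ ε ≤ θ ∧ (Z' = 0 ∨ 2 * ε ≤ ‖Z'‖) ∧
        ∀ x ∈ ball (0 : E) r, ∀ y ∈ ball (0 : E) r, U x - U y - ⟪Z', x - y⟫ ≤ ε * ‖x - y‖)
    {g U : E → ℝ} (hU : IsNondivSolution p g U (ball 0 1))
    (hlip : ∀ x ∈ ball (0 : E) 1, ∀ y ∈ ball (0 : E) 1, U x - U y ≤ ‖x - y‖)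
    (hg : ∀ P Q, ‖P‖ ≤ 5 → ‖Q‖ ≤ 5 → |g P - g Q| ≤ Λ * ‖P - Q‖) (k : ℕ) :
    ∃ (Z : E) (ε : ℝ), 0 < ε ∧ ε ≤ θ ^ k ∧ (Z = 0 ∨ 2 * ε ≤ ‖Z‖) ∧
      ∀ x ∈ ball (0 : E) (r ^ k), ∀ y ∈ ball (0 : E) (r ^ k),
        U x - U y - ⟪Z, x - y⟫ ≤ ε * ‖x - y‖ := by
  induction k with
  | zero => exact ⟨0, 1, one_pos, by simp, Or.inl rfl, fun x hx y hy => by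
      simpa using hlip x (by simpa using hx) y (by simpa using hy)⟩
  | succ k ih =>
    obtain ⟨Z, ε, hε, hεk, hZ, hZlip⟩ := ih
    have hρ : 0 < r ^ k := pow_pos hr.1 k
    have hρ1 : r ^ k ≤ 1 := pow_le_one₀ hr.1.le hr.2.le
    set ρ := r ^ k
    have hε1 : ε ≤ 1 := hεk.trans (pow_le_one₀ hθ.1.le hθ.2.le)
    have hZ2 : ‖Z‖ ≤ 2 := by
      obtain ⟨P, hP, -⟩ := hU 0 (by simp)
      have h1 := hP.norm_sub_le hε.le (ball_mem_nhds 0 hρ) hZlip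
      have h2 := hP.norm_sub_le (Z := 0) zero_le_one (ball_mem_nhds 0 one_pos)
        (fun x hx y hy => by simpa using hlip x hx y hy)
      have h3 := _root_.norm_sub_le P (P - Z)
      rw [sub_sub_cancel] at h3
      rw [sub_zero] at h2
      linarith
    have hsc : ∀ y ∈ ball (0 : E) 1, (0 : E) + ρ • y ∈ ball (0 : E) ρ := by
      intro y hy
      rw [mem_ball, dist_zero_right] at hy ⊢
      rw [zero_add, norm_smul, Real.norm_of_nonneg hρ.le]
      nlinarith
    have hc : 0 < (ε * ρ)⁻¹ := by positivity
    have hcρ : (ε * ρ)⁻¹ * ρ = ε⁻¹ := by field_simp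
    have hcρ2 : (ε * ρ)⁻¹ * ρ ^ 2 = ρ / ε := by field_simp
    have hflat : IsFlatSolution p Λ (fun P => (ε * ρ)⁻¹ * ρ ^ 2 * g (((ε * ρ)⁻¹ * ρ)⁻¹ • P))
        (fun y => (ε * ρ)⁻¹ * U (0 + ρ • y)) (ε⁻¹ • Z) := by
      refine ⟨hU.rescale 0 hc hρ fun y hy => ball_subset_ball hρ1 (hsc y hy), ?_, ?_, ?_⟩
      · intro x hx y hy
        have h1 := hZlip _ (hsc x hx) _ (hsc y hy)
        rw [add_sub_add_left_eq_sub, ← smul_sub, real_inner_smul_right, norm_smul,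
          Real.norm_of_nonneg hρ.le] at h1
        have h2 := mul_le_mul_of_nonneg_left h1 hc.le
        rw [real_inner_smul_left]
        calc _ = (ε * ρ)⁻¹ * (U (0 + ρ • x) - U (0 + ρ • y) - ρ * ⟪Z, x - y⟫) := by
              field_simp
          _ ≤ _ := h2
          _ = _ := by field_simp
      · refine hZ.imp (fun h => by rw [h, smul_zero]) fun h => ?_
        rw [norm_smul, norm_inv, Real.norm_of_nonneg hε.le, inv_mul_eq_div, le_div_iff₀ hε]
        exact h
      · intro P Q hP hQ
        simp only [hcρ, hcρ2, inv_inv]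
        have h5 : ∀ P : E, ‖P - ε⁻¹ • Z‖ ≤ 3 → ‖ε • P‖ ≤ 5 := by
          intro P hP
          have h1 : ε • P = ε • (P - ε⁻¹ • Z) + Z := by
            rw [smul_sub, smul_smul, mul_inv_cancel₀ hε.ne', one_smul, sub_add_cancel]
          rw [h1]
          refine (norm_add_le _ _).trans ?_
          rw [norm_smul, Real.norm_of_nonneg hε.le]
          have : ε * ‖P - ε⁻¹ • Z‖ ≤ 1 * 3 := by gcongr
          linarith
        have h1 := hg _ _ (h5 P hP) (h5 Q hQ)
        rw [← smul_sub, norm_smul, Real.norm_of_nonneg hε.le] at h1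
        rw [← mul_sub, abs_mul, abs_of_pos (by positivity)]
        calc ρ / ε * |g (ε • P) - g (ε • Q)| ≤ ρ / ε * (Λ * (ε * ‖P - Q‖)) := by gcongr
          _ = ρ * (Λ * ‖P - Q‖) := by field_simp
          _ ≤ 1 * (Λ * ‖P - Q‖) := by gcongr
          _ = _ := one_mul _
    obtain ⟨Z', ε', hε', hεθ, hZ', hlip'⟩ := himp _ _ _ hflat
    refine ⟨ε • Z', ε * ε', by positivity, ?_, ?_, fun x hx y hy => ?_⟩
    · rw [pow_succ]
      exact mul_le_mul hεk hεθ hε'.le (pow_nonneg hθ.1.le k)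
    · refine hZ'.imp (fun h => by rw [h, smul_zero]) fun h => ?_
      rw [norm_smul, Real.norm_of_nonneg hε.le]
      nlinarith
    · have hinv : ∀ x ∈ ball (0 : E) (r ^ (k + 1)), ρ⁻¹ • x ∈ ball (0 : E) r := by
        intro x hx
        rw [mem_ball, dist_zero_right] at hx ⊢
        rw [norm_smul, norm_inv, Real.norm_of_nonneg hρ.le, inv_mul_lt_iff₀ hρ]
        rwa [pow_succ] at hx
      have h1 := hlip' _ (hinv x hx) _ (hinv y hy)
      simp only [zero_add, smul_smul, mul_inv_cancel₀ hρ.ne', one_smul] at h1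
      rw [← smul_sub, real_inner_smul_right, norm_smul, norm_inv,
        Real.norm_of_nonneg hρ.le] at h1
      have h2 := mul_le_mul_of_nonneg_left h1 (show 0 ≤ ε * ρ by positivity)
      rw [real_inner_smul_left]
      calc _ = ε * ρ * ((ε * ρ)⁻¹ * U x - (ε * ρ)⁻¹ * U y - ρ⁻¹ * ⟪Z', x - y⟫) := by
            field_simp
        _ ≤ _ := h2
        _ = _ := by field_simp

/-- Hölder continuity of the gradient at the origin for `1`-Lipschitz solutions. -/
theorem CoeffBound.exists_gradient_holder {p A : ℝ} (hA : CoeffBound E p A) {Λ : ℝ} (hΛ : 0 ≤ Λ) :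
    ∃ C > 0, ∃ α ∈ Ioo (0 : ℝ) 1, ∀ g U : E → ℝ, IsNondivSolution p g U (ball 0 1) →
      (∀ x ∈ ball (0 : E) 1, ∀ y ∈ ball (0 : E) 1, U x - U y ≤ ‖x - y‖) →
      (∀ P Q, ‖P‖ ≤ 5 → ‖Q‖ ≤ 5 → |g P - g Q| ≤ Λ * ‖P - Q‖) →
      ∀ x P P₀ : E, ‖x‖ < 1 → HasGradientAt U P x → HasGradientAt U P₀ 0 →
        ‖P - P₀‖ ≤ C * ‖x‖ ^ α := by
  obtain ⟨r, hr, θ, hθ, himp⟩ := hA.exists_improvement hΛ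
  set α := min (Real.logb r θ) (1 / 2) with hα
  have hα0 : 0 < α := lt_min (Real.logb_pos_of_base_lt_one hr.1 hr.2 hθ.1 hθ.2) (by norm_num)
  have hα1 : α ≤ 1 / 2 := min_le_right _ _
  have hθα : θ ≤ r ^ α := by
    rw [← Real.rpow_logb hr.1 hr.2.ne hθ.1]
    exact Real.rpow_le_rpow_of_exponent_ge hr.1 hr.2.le (min_le_left _ _)
  have hr0 := hr.1
  refine ⟨2 * (r ^ 2)⁻¹, by positivity, α, ⟨hα0, by linarith⟩, ?_⟩
  intro g U hU hlip hg x P P₀ hx hP hP₀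
  rcases eq_or_ne x 0 with rfl | hx0
  · rw [hP.unique hP₀, sub_self, norm_zero]
    positivity
  have hxpos : 0 < ‖x‖ := norm_pos_iff.2 hx0
  obtain ⟨k, hk1, hk2⟩ : ∃ k : ℕ, r ^ (k + 2) ≤ ‖x‖ ∧ ‖x‖ < r ^ k := by
    obtain ⟨n, hn1, hn2⟩ := exists_nat_pow_near_of_lt_one hxpos hx.le hr.1 hr.2
    rcases n with _ | n
    · exact ⟨0, (pow_le_pow_of_le_one hr.1.le hr.2.le (by norm_num)).trans hn1.le, by simpa using hx⟩
    · exact ⟨n, hn1.le, hn2.trans_lt (pow_lt_pow_right_of_lt_one₀ hr.1 hr.2 (by simp))⟩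
  obtain ⟨Z, ε, hε, hεk, -, hZlip⟩ :=
    flatness_iteration hΛ hr hθ himp hU hlip hg k
  have h1 := hP.norm_sub_le hε.le (isOpen_ball.mem_nhds (by simpa using hk2)) hZlip
  have h2 := hP₀.norm_sub_le hε.le (ball_mem_nhds 0 (pow_pos hr.1 k)) hZlip
  have h3 : ‖P - P₀‖ ≤ 2 * θ ^ k := by
    calc ‖P - P₀‖ = ‖(P - Z) - (P₀ - Z)‖ := by congr 1; abel
      _ ≤ _ := _root_.norm_sub_le _ _
      _ ≤ _ := by linarith
  have h4 : θ ^ k ≤ (r ^ 2)⁻¹ * ‖x‖ ^ α := by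
    calc θ ^ k ≤ (r ^ α) ^ k := pow_le_pow_left₀ hθ.1.le hθα k
      _ = (r ^ k) ^ α := by
          rw [← Real.rpow_natCast, ← Real.rpow_natCast, ← Real.rpow_mul hr.1.le,
            ← Real.rpow_mul hr.1.le, mul_comm]
      _ ≤ ((r ^ 2)⁻¹ * ‖x‖) ^ α := by
          refine Real.rpow_le_rpow (by positivity) ?_ hα0.le
          rw [inv_mul_eq_div, le_div_iff₀ (by positivity), ← pow_add]
          exact hk1
      _ = (r ^ 2)⁻¹ ^ α * ‖x‖ ^ α := Real.mul_rpow (by positivity) hxpos.le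
      _ ≤ (r ^ 2)⁻¹ ^ (1 : ℝ) * ‖x‖ ^ α := by
          gcongr
          · exact (one_le_inv₀ (by positivity)).2 (pow_le_one₀ hr.1.le hr.2.le)
          · linarith
      _ = _ := by rw [Real.rpow_one]
  linarith

end Iteration

section Local

theorem abs_rpow_sub_rpow_le {s B x y : ℝ} (hs : 1 ≤ s) (hx : x ∈ Icc 0 B) (hy : y ∈ Icc 0 B) :
    |x ^ s - y ^ s| ≤ s * B ^ (s - 1) * |x - y| := by
  have := (convex_Icc 0 B).norm_image_sub_le_of_norm_hasDerivWithin_le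
    (f := fun t => t ^ s) (f' := fun t => s * t ^ (s - 1)) (C := s * B ^ (s - 1))
    (fun t _ => (Real.hasDerivAt_rpow_const (Or.inr hs)).hasDerivWithinAt) (fun t ht => ?_) hy hx
  · simpa [Real.norm_eq_abs] using this
  · have h1 : 0 ≤ t ^ (s - 1) := Real.rpow_nonneg ht.1 _
    rw [Real.norm_of_nonneg (by positivity)]
    have : t ^ (s - 1) ≤ B ^ (s - 1) := Real.rpow_le_rpow ht.1 ht.2 (by linarith)
    gcongr

variable {E : Type*} [NormedAddCommGroup E] [InnerProductSpace ℝ E]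

theorem abs_norm_rpow_sub_le {s B : ℝ} (hs : 1 ≤ s) {P Q : E} (hP : ‖P‖ ≤ B) (hQ : ‖Q‖ ≤ B) :
    |‖P‖ ^ s - ‖Q‖ ^ s| ≤ s * B ^ (s - 1) * ‖P - Q‖ := by
  refine (abs_rpow_sub_rpow_le hs ⟨norm_nonneg P, hP⟩ ⟨norm_nonneg Q, hQ⟩).trans ?_
  have hB : 0 ≤ B := (norm_nonneg P).trans hP
  gcongr
  exact abs_norm_sub_norm_le P Q

variable [FiniteDimensional ℝ E]

theorem sub_le_of_norm_gradient_le {U : E → ℝ} {D : E → E} {T : Set E} {M : ℝ} (hT : Convex ℝ T)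
    (hD : ∀ x ∈ T, HasGradientAt U (D x) x) (hM : ∀ x ∈ T, ‖D x‖ ≤ M) {x y : E} (hx : x ∈ T)
    (hy : y ∈ T) : U x - U y ≤ M * ‖x - y‖ :=
  (le_abs_self _).trans <| hT.norm_image_sub_le_of_norm_hasFDerivWithin_le
    (fun z hz => (hD z hz).hasFDerivAt.hasFDerivWithinAt)
    (fun z hz => by rw [LinearIsometryEquiv.norm_map]; exact hM z hz) hy hx

theorem HasGradientAt.norm_le_of_eventually {U : E → ℝ} {P x : E} {L : ℝ}
    (hP : HasGradientAt U P x) (hL : 0 ≤ L) (h : ∀ᶠ y in 𝓝 x, U x - U y ≤ L * ‖x - y‖) : ‖P‖ ≤ L := by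
  rcases eq_or_ne P 0 with rfl | hP0
  · simpa using hL
  have hPpos : 0 < ‖P‖ := norm_pos_iff.2 hP0
  refine le_of_forall_pos_le_add fun c hc => ?_
  have h1 := (hasFDerivAt_iff_isLittleO.1 hP.hasFDerivAt).def hc
  have h2 : Tendsto (fun t : ℝ => x - t • P) (𝓝[>] 0) (𝓝 x) := by
    have : Continuous fun t : ℝ => x - t • P := by fun_prop
    simpa using (this.tendsto 0).mono_left nhdsWithin_le_nhds
  obtain ⟨t, ⟨h3, h4⟩, ht⟩ := ((h2.eventually (h1.and h)).and self_mem_nhdsWithin).exists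
  have ht : 0 < t := ht
  rw [sub_sub_cancel, norm_smul, Real.norm_of_nonneg ht.le] at h4
  rw [sub_sub_cancel_left, norm_neg, norm_smul, Real.norm_of_nonneg ht.le,
    InnerProductSpace.toDual_apply_apply, inner_neg_right, real_inner_smul_right,
    real_inner_self_eq_norm_sq] at h3
  have h5 := (abs_le.1 h3).2
  have h6 : (t * ‖P‖) * ‖P‖ ≤ (t * ‖P‖) * (L + c) := by nlinarith
  exact le_of_mul_le_mul_left h6 (by positivity)

set_option maxHeartbeats 1000000 in
/-- Interior Lipschitz estimate for bounded solutions. -/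
theorem CoeffBound.exists_gradient_bound {p A : ℝ} (hA : CoeffBound E p A) {s Λ : ℝ}
    (hs : s ∈ Ioo (1 : ℝ) 2) (hΛ : 0 ≤ Λ) :
    ∃ C > 0, ∀ (l : ℝ) (U : E → ℝ) (D : E → E), 0 ≤ l → l ≤ Λ →
      IsNondivSolution p (fun P => l * ‖P‖ ^ s) U (ball 0 1) →
      (∀ x ∈ ball (0 : E) 1, HasGradientAt U (D x) x) → ContinuousOn D (ball 0 1) →
      (∀ x ∈ ball (0 : E) 1, |U x| ≤ 1) → ∀ x, ‖x‖ ≤ 1 / 2 → ‖D x‖ ≤ C := by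
  obtain ⟨hs1, hs2⟩ := hs
  have hA1 := hA.one_le
  set B := (32 * A * Λ) ^ (2 - s)⁻¹ with hB
  have hB0 : 0 ≤ B := by positivity
  refine ⟨4 * (2112 * A ^ 2 + 64 + B), by positivity, ?_⟩
  intro l U D hl hlΛ hU hD hDc hU1
  have hsub : closedBall (0 : E) (3 / 4) ⊆ ball 0 1 := closedBall_subset_ball (by norm_num)
  obtain ⟨x₀, hx₀, hmax⟩ := (isCompact_closedBall (0 : E) (3 / 4)).exists_isMaxOn
    ⟨0, mem_closedBall_self (by norm_num)⟩ (f := fun x => (3 / 4 - ‖x‖) * ‖D x‖)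
    ((continuousOn_const.sub continuousOn_id.norm).mul (hDc.mono hsub).norm)
  have hmax' : ∀ x, ‖x‖ ≤ 3 / 4 → (3 / 4 - ‖x‖) * ‖D x‖ ≤ (3 / 4 - ‖x₀‖) * ‖D x₀‖ :=
    fun x hx => hmax (by simpa using hx)
  suffices hS : (3 / 4 - ‖x₀‖) * ‖D x₀‖ ≤ 2112 * A ^ 2 + 64 + B by
    intro x hx
    have h1 := hmax' x (by linarith)
    nlinarith [norm_nonneg (D x)]
  by_contra! hS
  set S := (3 / 4 - ‖x₀‖) * ‖D x₀‖ with hSdef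
  set d := 3 / 4 - ‖x₀‖ with hd
  have hS64 : 64 < S := by nlinarith
  have hSA : 2112 * A ^ 2 < S := by linarith
  have hSB : B < S := by nlinarith
  have hSpos : 0 < S := by linarith
  have hd0 : 0 < d := by
    by_contra! h
    have := mul_nonpos_of_nonpos_of_nonneg h (norm_nonneg (D x₀))
    linarith
  have hd1 : d ≤ 1 := by have := norm_nonneg x₀; linarith
  have hball : ∀ x, ‖x - x₀‖ ≤ d / 2 → ‖x‖ ≤ 3 / 4 - d / 2 := by
    intro x hx
    have := norm_add_le (x - x₀) x₀
    rw [sub_add_cancel] at this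
    linarith
  have hball1 : ∀ x, ‖x - x₀‖ ≤ d / 2 → x ∈ ball (0 : E) 1 := fun x hx => by
    have := hball x hx
    rw [mem_ball, dist_zero_right]
    linarith
  have hgrad : ∀ x ∈ closedBall x₀ (d / 2), ‖D x‖ ≤ 2 * S / d := by
    intro x hx
    rw [mem_closedBall, dist_eq_norm] at hx
    have h1 := hball x hx
    have h2 := hmax' x (by linarith)
    rw [le_div_iff₀ hd0]
    nlinarith [norm_nonneg (D x)]
  have hpair : ∀ x y, ‖x - x₀‖ ≤ d / 4 → ‖x - y‖ ≤ d / 4 →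
      ‖x - x₀‖ ≤ d / 2 ∧ ‖y - x₀‖ ≤ d / 2 := by
    intro x y hx hy
    refine ⟨by linarith, ?_⟩
    have := norm_sub_le (x - x₀) (x - y)
    rw [sub_sub_sub_cancel_left] at this
    linarith
  have hU2 : ∀ x y, ‖x - x₀‖ ≤ d / 4 → ‖x - y‖ ≤ d / 4 → U x - U y ≤ 2 := by
    intro x y hx hy
    obtain ⟨h1, h2⟩ := hpair x y hx hy
    have h3 := (abs_le.1 (hU1 x (hball1 x h1))).2
    have h4 := (abs_le.1 (hU1 y (hball1 y h2))).1
    linarith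
  have hSd : 0 < S / d := by positivity
  have hkey : ∀ y, ‖x₀ - y‖ ≤ d / 4 → U x₀ - U y ≤ S / (2 * d) * ‖x₀ - y‖ := by
    intro y hy
    have h := hU.mono (T := closedBall x₀ (d / 4 + d / 4)) (fun x hx => hball1 x (by
      rw [mem_closedBall, dist_eq_norm] at hx; linarith)) |>.doubling_lipschitz hA (Z := 0)
      (m := S / d ^ 2) (L := S / (2 * d)) (κ := 32 / d ^ 2) (ρ := S / (4 * d)) (M := 2 * S / d)
      (Λ := 2 * Λ * (S / d) ^ (s - 1)) (by positivity) (by positivity) (by positivity)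
      (by positivity) (by positivity) (by positivity) (le_of_eq (by field_simp; norm_num))
      ?_ ?_ ?_ ?_ ?_ ?_ ?_ hy
    · simpa using h
    · intro x y hx hy
      obtain ⟨h1, h2⟩ := hpair x y hx hy
      rw [inner_zero_left, sub_zero]
      exact sub_le_of_norm_gradient_le (convex_closedBall x₀ (d / 2))
        (fun z hz => hD z (hball1 z (by rwa [mem_closedBall, dist_eq_norm] at hz))) hgrad
        (by rwa [mem_closedBall, dist_eq_norm]) (by rwa [mem_closedBall, dist_eq_norm])
    · intro x y hx hy
      rw [inner_zero_left, sub_zero]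
      have h1 := hU2 x y hx hy
      have h2 : 32 / d ^ 2 * (d / 4) ^ 2 = 2 := by field_simp; norm_num
      have h3 : 0 ≤ S / (2 * d) * ‖x - y‖ - S / d ^ 2 / 2 * ‖x - y‖ ^ 2 := by
        have : S / (2 * d) * ‖x - y‖ - S / d ^ 2 / 2 * ‖x - y‖ ^ 2 =
            S / (2 * d ^ 2) * ‖x - y‖ * (d - ‖x - y‖) := by
          field_simp
        rw [this]
        exact mul_nonneg (by positivity) (by linarith)
      linarith
    · intro x y hx hy
      rw [inner_zero_left, sub_zero]
      have h1 := hU2 x y hx hy.le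
      have : S / (2 * d) * (d / 4) - S / d ^ 2 / 2 * (d / 4) ^ 2 = 3 * S / 32 := by
        field_simp; norm_num
      rw [this]
      linarith
    · intro w hw _
      rw [zero_add]
      refine le_trans (le_of_eq ?_) hw
      field_simp
      norm_num
    · have : S / (4 * d) - 2 * (32 / d ^ 2) * (d / 4) = (S - 64) / (4 * d) := by
        field_simp; norm_num
      have h2 : 0 < (S - 64) / (4 * d) := div_pos (by linarith) (by positivity)
      linarith
    · intro w K _ hw hK
      rw [zero_add]
      have hK' : ‖K‖ ≤ S / (2 * d) := by
        have : S / (2 * d) - 2 * (32 / d ^ 2) * (d / 4) = (S - 32) / (2 * d) := by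
          field_simp; ring
        have h2 : 0 < (S - 32) / (2 * d) := div_pos (by linarith) (by positivity)
        linarith
      have e1 : S / (2 * d) + S / (2 * d) = S / d := by field_simp; norm_num
      have hw1 : ‖w‖ ≤ S / d := by
        have : 0 < S / (2 * d) := by positivity
        linarith
      have hw2 : ‖w + K‖ ≤ S / d := (norm_add_le w K).trans (by linarith)
      have h1 := abs_norm_rpow_sub_le hs1.le hw1 hw2
      rw [sub_add_cancel_left, norm_neg] at h1
      rw [← mul_sub]
      have h3 : 0 ≤ (S / d) ^ (s - 1) := by positivity
      calc l * (‖w‖ ^ s - ‖w + K‖ ^ s) ≤ l * |‖w‖ ^ s - ‖w + K‖ ^ s| := by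
            gcongr; exact le_abs_self _
        _ ≤ Λ * (2 * (S / d) ^ (s - 1) * ‖K‖) := by
            refine mul_le_mul hlΛ (h1.trans ?_) (abs_nonneg _) hΛ
            gcongr
        _ = _ := by ring
    · have e1 : d * (S / d) ^ (s - 1) ≤ S ^ (s - 1) := by
        rw [Real.div_rpow hSpos.le hd0.le, mul_div_assoc', div_le_iff₀ (by positivity), mul_comm]
        gcongr
        calc d = d ^ (1 : ℝ) := (Real.rpow_one d).symm
          _ ≤ d ^ (s - 1) := Real.rpow_le_rpow_of_exponent_ge hd0 hd1 (by linarith)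
      have e2 : 32 * A * Λ * S ^ (s - 1) ≤ S := by
        have h1 : 32 * A * Λ ≤ S ^ (2 - s) := by
          have h2 : 32 * A * Λ = B ^ (2 - s) := by
            rw [hB, ← Real.rpow_mul (by positivity), inv_mul_cancel₀ (by linarith), Real.rpow_one]
          rw [h2]
          exact Real.rpow_le_rpow hB0 hSB.le (by linarith)
        calc 32 * A * Λ * S ^ (s - 1) ≤ S ^ (2 - s) * S ^ (s - 1) := by gcongr
          _ = S := by
            rw [← Real.rpow_add hSpos]
            ring_nf
            exact Real.rpow_one S
      have e3 : A * (2 * (32 / d ^ 2) * (d / 4) * (2 * Λ * (S / d) ^ (s - 1)) +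
          2 * (32 / d ^ 2) * A + 4 * A * (S / (2 * d)) * (32 / d ^ 2) * (2 * S / d) /
          (S / (4 * d)) ^ 2) =
          (32 * A * Λ * (d * (S / d) ^ (s - 1)) + 2112 * A ^ 2) / d ^ 2 := by
        generalize (S / d) ^ (s - 1) = t
        field_simp
        ring
      rw [e3, mul_div_assoc', div_lt_div_iff_of_pos_right (by positivity)]
      have : 32 * A * Λ * (d * (S / d) ^ (s - 1)) ≤ 32 * A * Λ * S ^ (s - 1) := by gcongr
      linarith
  have hx₀1 : x₀ ∈ ball (0 : E) 1 := hsub hx₀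
  have hfin := (hD x₀ hx₀1).norm_le_of_eventually (L := S / (2 * d)) (by positivity) (by
    filter_upwards [closedBall_mem_nhds x₀ (show 0 < d / 4 by positivity)] with y hy
    exact hkey y (by rwa [mem_closedBall, dist_eq_norm, norm_sub_rev] at hy))
  rw [le_div_iff₀ (by positivity)] at hfin
  have : S = d * ‖D x₀‖ := hSdef
  linarith

/-- Interior gradient bound and Hölder continuity of the gradient at the centre for bounded
solutions. -/
theorem CoeffBound.exists_local_estimate {p A : ℝ} (hA : CoeffBound E p A) {s Λ : ℝ}
    (hs : s ∈ Ioo (1 : ℝ) 2) (hΛ : 0 ≤ Λ) :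
    ∃ C > 0, ∃ α ∈ Ioo (0 : ℝ) 1, ∀ (l : ℝ) (U : E → ℝ) (D : E → E), 0 ≤ l → l ≤ Λ →
      IsNondivSolution p (fun P => l * ‖P‖ ^ s) U (ball 0 1) →
      (∀ x ∈ ball (0 : E) 1, HasGradientAt U (D x) x) → ContinuousOn D (ball 0 1) →
      (∀ x ∈ ball (0 : E) 1, |U x| ≤ 1) →
      (∀ x, ‖x‖ ≤ 1 / 2 → ‖D x‖ ≤ C) ∧ ∀ x, ‖x‖ < 1 / 2 → ‖D x - D 0‖ ≤ C * ‖x‖ ^ α := by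
  obtain ⟨C₀, hC₀, hbound⟩ := hA.exists_gradient_bound hs hΛ
  obtain ⟨C₁, hC₁, α, hα, hholder⟩ := hA.exists_gradient_holder
    (show 0 ≤ Λ * (5 * C₀) ^ (s - 1) by positivity)
  refine ⟨C₀ + 2 * C₀ * C₁, by positivity, α, hα, ?_⟩
  intro l U D hl hlΛ hU hD hDc hU1
  have hDC := hbound l U D hl hlΛ hU hD hDc hU1
  refine ⟨fun x hx => (hDC x hx).trans (le_add_of_nonneg_right (by positivity)), fun x hx => ?_⟩
  have hhalf : ∀ y ∈ ball (0 : E) 1, ‖(0 : E) + (1 / 2 : ℝ) • y‖ < 1 / 2 := by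
    intro y hy
    rw [mem_ball, dist_zero_right] at hy
    rw [zero_add, norm_smul, Real.norm_of_nonneg (by norm_num)]
    linarith
  have hmem : ∀ y ∈ ball (0 : E) 1, (0 : E) + (1 / 2 : ℝ) • y ∈ ball (0 : E) 1 := fun y hy => by
    rw [mem_ball, dist_zero_right]
    linarith [hhalf y hy]
  have hc : 0 < 2 / C₀ := by positivity
  have hcρ : 2 / C₀ * (1 / 2) = C₀⁻¹ := by field_simp
  have hV := hU.rescale 0 hc (show (0 : ℝ) < 1 / 2 by norm_num) hmem
  have hDV : ∀ y ∈ ball (0 : E) 1,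
      HasGradientAt (fun y => 2 / C₀ * U (0 + (1 / 2 : ℝ) • y))
        (C₀⁻¹ • D (0 + (1 / 2 : ℝ) • y)) y := fun y hy => by
    rw [← hcρ]
    exact (hD _ (hmem y hy)).comp_affine (2 / C₀)
  have hx1 : ‖(2 : ℝ) • x‖ < 1 := by
    rw [norm_smul, Real.norm_of_nonneg zero_le_two]
    linarith
  have h := hholder _ _ hV (fun y hy z hz => ?_) (fun P Q hP hQ => ?_) ((2 : ℝ) • x) _ _ hx1
    (hDV _ (by simpa using hx1)) (hDV 0 (by simp))
  · rw [zero_add, smul_smul, show (1 / 2 : ℝ) * 2 = 1 by norm_num, one_smul, smul_zero, zero_add,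
      ← smul_sub, norm_smul, norm_smul, norm_inv, Real.norm_of_nonneg hC₀.le,
      Real.norm_of_nonneg zero_le_two, inv_mul_le_iff₀ hC₀,
      Real.mul_rpow zero_le_two (norm_nonneg x)] at h
    have h2 : (2 : ℝ) ^ α ≤ 2 := by
      calc (2 : ℝ) ^ α ≤ 2 ^ (1 : ℝ) := Real.rpow_le_rpow_of_exponent_le one_le_two hα.2.le
        _ = 2 := Real.rpow_one 2
    have h3 : 0 ≤ ‖x‖ ^ α := by positivity
    calc ‖D x - D 0‖ ≤ C₀ * (C₁ * (2 ^ α * ‖x‖ ^ α)) := h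
      _ ≤ C₀ * (C₁ * (2 * ‖x‖ ^ α)) := by gcongr
      _ ≤ _ := by nlinarith [mul_nonneg hC₀.le h3]
  · rw [← one_mul ‖y - z‖]
    refine sub_le_of_norm_gradient_le (convex_ball 0 1) hDV (fun w hw => ?_) hy hz
    rw [norm_smul, norm_inv, Real.norm_of_nonneg hC₀.le, inv_mul_le_iff₀ hC₀, mul_one]
    exact hDC _ (hhalf w hw).le
  · have h5 : ∀ P : E, ‖P‖ ≤ 5 → ‖C₀ • P‖ ≤ 5 * C₀ := fun P hP => by
      rw [norm_smul, Real.norm_of_nonneg hC₀.le]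
      nlinarith
    have h1 := abs_norm_rpow_sub_le hs.1.le (h5 P hP) (h5 Q hQ)
    rw [← smul_sub, norm_smul C₀ (P - Q), Real.norm_of_nonneg hC₀.le] at h1
    simp only [hcρ, inv_inv]
    rw [← mul_sub, ← mul_sub, abs_mul (2 / C₀ * (1 / 2) ^ 2), abs_mul l, abs_of_nonneg hl,
      abs_of_pos (by positivity)]
    calc 2 / C₀ * (1 / 2) ^ 2 * (l * |‖C₀ • P‖ ^ s - ‖C₀ • Q‖ ^ s|)
        ≤ 2 / C₀ * (1 / 2) ^ 2 * (Λ * (2 * (5 * C₀) ^ (s - 1) * (C₀ * ‖P - Q‖))) := by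
          gcongr
          refine h1.trans ?_
          have := hs.2.le
          gcongr
      _ = Λ * (5 * C₀) ^ (s - 1) * ‖P - Q‖ := by
        field_simp

end Local

section StrongSolution

theorem sum_coeffSqrt_apply {E : Type*} [NormedAddCommGroup E] [InnerProductSpace ℝ E]
    [FiniteDimensional ℝ E] {p : ℝ} (hp : 1 ≤ p) (H : E →ₗ[ℝ] E →ₗ[ℝ] ℝ) {P : E} (hP : P ≠ 0) :
    ∑ i, H (coeffSqrt p P (stdOrthonormalBasis ℝ E i)) (coeffSqrt p P (stdOrthonormalBasis ℝ E i)) =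
      ∑ i, H (stdOrthonormalBasis ℝ E i) (stdOrthonormalBasis ℝ E i) +
        (p - 2) * H (‖P‖⁻¹ • P) (‖P‖⁻¹ • P) := by
  set n := ‖P‖⁻¹ • P with hn
  have hn1 : ‖n‖ = 1 := norm_inv_smul_self hP
  set e := stdOrthonormalBasis ℝ E
  have hsum : ∑ i, ⟪n, e i⟫ • e i = n := by
    conv_rhs => rw [← e.sum_repr' n]
    simp only [real_inner_comm]
  have h1 : ∑ i, ⟪n, e i⟫ * H n (e i) = H n n := by
    conv_rhs => arg 2; rw [← hsum]
    simp
  have h2 : ∑ i, ⟪n, e i⟫ * H (e i) n = H n n := by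
    conv_rhs => arg 1; rw [← hsum]
    simp
  have h3 : ∑ i, ⟪n, e i⟫ ^ 2 = 1 := by
    have := e.sum_sq_norm_inner_left n
    simpa [hn1] using this
  have hθ : (√(p - 1)) ^ 2 = p - 1 := Real.sq_sqrt (by linarith)
  set θ := √(p - 1) - 1 with hθd
  have hθ2 : 2 * θ + θ ^ 2 = p - 2 := by rw [hθd]; linarith
  have h4 : ∀ i, H (coeffSqrt p P (e i)) (coeffSqrt p P (e i)) = H (e i) (e i) +
      θ * (⟪n, e i⟫ * H n (e i)) + θ * (⟪n, e i⟫ * H (e i) n) +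
      θ ^ 2 * H n n * ⟪n, e i⟫ ^ 2 := by
    intro i
    simp only [coeffSqrt, ← hn, ← hθd, map_add, map_smul, LinearMap.add_apply, LinearMap.smul_apply,
      smul_eq_mul]
    ring
  simp only [h4, Finset.sum_add_distrib, ← Finset.mul_sum, h1, h2, h3]
  rw [← hθ2]
  ring

variable {N : ℕ} {p q : ℝ} {G : Set (EuclideanSpace ℝ (Fin N))} {u : EuclideanSpace ℝ (Fin N) → ℝ}

theorem IsStrongSolution.hasGradientAt (hu : IsStrongSolution p q G u) (hG : IsOpen G)
    {x : EuclideanSpace ℝ (Fin N)} (hx : x ∈ G) : HasGradientAt u (gradient u x) x :=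
  ((hu.1.differentiableOn one_ne_zero).differentiableAt (hG.mem_nhds hx)).hasGradientAt

theorem IsStrongSolution.continuousOn_gradient (hu : IsStrongSolution p q G u) (hG : IsOpen G) :
    ContinuousOn (gradient u) G :=
  (InnerProductSpace.toDual ℝ (EuclideanSpace ℝ (Fin N))).symm.continuous.comp_continuousOn
    (hu.1.continuousOn_fderiv_of_isOpen hG le_rfl)

theorem IsStrongSolution.differentiableAt_gradient (hu : IsStrongSolution p q G u) (hG : IsOpen G)
    {x : EuclideanSpace ℝ (Fin N)} (hx : x ∈ G) (hx0 : gradient u x ≠ 0) :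
    DifferentiableAt ℝ (gradient u) x := by
  have hopen : IsOpen {x | x ∈ G ∧ gradient u x ≠ 0} :=
    (hu.continuousOn_gradient hG).isOpen_inter_preimage hG isOpen_compl_singleton
  have h1 : ContDiffAt ℝ 3 u x := hu.2.1.contDiffAt (hopen.mem_nhds ⟨hx, hx0⟩)
  have h2 : DifferentiableAt ℝ (fderiv ℝ u) x :=
    (h1.fderiv_right (m := 1) (by norm_num)).differentiableAt one_ne_zero
  exact (InnerProductSpace.toDual ℝ (EuclideanSpace ℝ (Fin N))).symm.toContinuousLinearEquiv
    |>.differentiableAt.comp x h2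

theorem IsStrongSolution.isNondivSolution (hp : 1 ≤ p) (hu : IsStrongSolution p q G u)
    (hG : IsOpen G) : IsNondivSolution p (fun P => ‖P‖ ^ (q - p + 2)) u G := by
  intro x hx
  refine ⟨gradient u x, hu.hasGradientAt hG hx, fun hP => ?_⟩
  have hT := (hu.differentiableAt_gradient hG hx hP).hasFDerivAt
  set T := fderiv ℝ (gradient u) x
  set P := gradient u x with hPdef
  have hPpos : 0 < ‖P‖ := norm_pos_iff.2 hP
  refine ⟨(innerₗ _).comp T.toLinearMap, fun ξ => ?_, ?_⟩
  · have hline : ∀ s : ℝ, HasDerivAt (fun s : ℝ => x + s • ξ) ξ s := fun s => by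
      simpa using ((hasDerivAt_id s).smul_const ξ).const_add x
    have hcont : Tendsto (fun s : ℝ => x + s • ξ) (𝓝 0) (𝓝 x) := by
      simpa using (hline 0).continuousAt.tendsto
    have hd : ∀ᶠ s in 𝓝 (0 : ℝ), HasDerivAt (fun s => u (x + s • ξ))
        ⟪gradient u (x + s • ξ), ξ⟫ s := by
      filter_upwards [hcont.eventually (hG.mem_nhds hx)] with s hs
      exact ((hu.hasGradientAt hG hs).hasFDerivAt.comp_hasDerivAt s (hline s)).congr_deriv (by simp)
    have hT0 : HasFDerivAt (gradient u) T (x + (0 : ℝ) • ξ) := by simpa using hT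
    have hd2 : HasDerivAt (fun s : ℝ => ⟪gradient u (x + s • ξ), ξ⟫) ⟪T ξ, ξ⟫ 0 := by
      simpa using (hT0.comp_hasDerivAt (0 : ℝ) (hline 0)).inner ℝ (hasDerivAt_const (0 : ℝ) ξ)
    exact (HasTaylorTwo.of_hasDerivAt hd hd2).congr (fun _ => rfl) (by simp [hPdef]) (by simp)
  · rw [sum_coeffSqrt_apply hp _ hP]
    set n := ‖P‖⁻¹ • P with hn
    set e := stdOrthonormalBasis ℝ (EuclideanSpace ℝ (Fin N))
    have h1 : HasFDerivAt (fun y => ‖gradient u y‖)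
        ((InnerProductSpace.toDual ℝ _ n).comp T) x :=
      (hasGradientAt_norm hP).hasFDerivAt.comp x hT
    have h2 : HasFDerivAt (pGradField p u) _ x :=
      (h1.rpow_const (p := p - 2) (Or.inl hPpos.ne')).smul hT
    have h3 := (hu.2.2 x hx).2
    rw [h2.fderiv, LinearMap.trace_eq_sum_inner _ e] at h3
    have h5 : ‖P‖ ^ (p - 2 - 1) = ‖P‖ ^ (p - 2) * ‖P‖⁻¹ := by
      rw [Real.rpow_sub_one hPpos.ne', div_eq_mul_inv]
    have h6 : ∑ i, ⟪n, T (e i)⟫ * ⟪e i, n⟫ = ⟪T n, n⟫ := by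
      have h : T n = ∑ i, ⟪e i, n⟫ • T (e i) := by
        conv_lhs => rw [← e.sum_repr' n]
        simp only [map_sum, map_smul]
      rw [h, sum_inner]
      refine Finset.sum_congr rfl fun i _ => ?_
      rw [real_inner_smul_left (T (e i)) n, real_inner_comm n (T (e i)), mul_comm]
    have h7 : ‖P‖ ^ q = ‖P‖ ^ (p - 2) * ‖P‖ ^ (q - p + 2) := by
      rw [← Real.rpow_add hPpos]
      congr 1
      ring
    have h8 : 0 < ‖P‖ ^ (p - 2) := by positivity
    have h9 : ∀ i, ⟪e i, (‖gradient u x‖ ^ (p - 2) • T + (((p - 2) * ‖gradient u x‖ ^ (p - 2 - 1)) •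
        (InnerProductSpace.toDual ℝ _ n).comp T).smulRight (gradient u x)) (e i)⟫ =
        ‖P‖ ^ (p - 2) * (⟪T (e i), e i⟫ + (p - 2) * (⟪n, T (e i)⟫ * ⟪e i, n⟫)) := by
      intro i
      simp only [add_apply, smul_apply,
        ContinuousLinearMap.smulRight_apply, ContinuousLinearMap.comp_apply,
        InnerProductSpace.toDual_apply_apply, inner_add_right, real_inner_smul_right, smul_eq_mul,
        ← hPdef, h5]
      rw [real_inner_comm (e i) (T (e i)), show ⟪e i, n⟫ = ‖P‖⁻¹ * ⟪e i, P⟫ from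
        real_inner_smul_right _ _ _]
      ring
    have h10 := (Finset.sum_congr rfl fun i _ => h9 i).symm.trans h3
    rw [← Finset.mul_sum, Finset.sum_add_distrib, ← Finset.mul_sum, h6, ← hPdef, h7] at h10
    exact mul_left_cancel₀ h8.ne' h10

end StrongSolution

section Scaling

theorem exists_scaled_gradient_estimate (N : ℕ) {p q Λ : ℝ} (hp : 1 < p)
    (hs : q - p + 2 ∈ Ioo (1 : ℝ) 2) (hΛ : 0 ≤ Λ) :
    ∃ C > 0, ∃ α ∈ Ioo (0 : ℝ) 1, ∀ u : EuclideanSpace ℝ (Fin N) → ℝ,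
      IsStrongSolution p q (ball 0 1 \ {0}) u → ∀ (x : EuclideanSpace ℝ (Fin N)) (b : ℝ), 0 < ‖x‖ →
        ‖x‖ ≤ 1 / 2 → 0 < b → (∀ z, ‖x‖ / 2 < ‖z‖ → ‖z‖ < 1 → |u z| ≤ b) →
        b ^ (q + 1 - p) * (‖x‖ / 2) ^ (p - q) ≤ Λ →
        ‖gradient u x‖ ≤ C * b * ‖x‖⁻¹ ∧ ∀ x', ‖x' - x‖ < ‖x‖ / 4 →
          ‖gradient u x' - gradient u x‖ ≤ C * b * ‖x‖⁻¹ * (‖x' - x‖ / ‖x‖) ^ α := by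
  obtain ⟨A, hA⟩ := exists_coeffBound (EuclideanSpace ℝ (Fin N)) hp
  obtain ⟨C, hC, α, hα, hloc⟩ := hA.exists_local_estimate hs hΛ
  refine ⟨4 * C, by positivity, α, hα, ?_⟩
  intro u hu x b hx hx2 hb hub hbΛ
  have hG : IsOpen (ball (0 : EuclideanSpace ℝ (Fin N)) 1 \ {0}) :=
    isOpen_ball.sdiff isClosed_singleton
  set R := ‖x‖ / 2 with hRdef
  have hR : 0 < R := by positivity
  have hc : 0 < b⁻¹ := inv_pos.2 hb
  have hnorm : ∀ y ∈ ball (0 : EuclideanSpace ℝ (Fin N)) 1,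
      R < ‖x + R • y‖ ∧ ‖x + R • y‖ < 1 := by
    intro y hy
    rw [mem_ball, dist_zero_right] at hy
    have h1 : ‖R • y‖ < R := by
      rw [norm_smul, Real.norm_of_nonneg hR.le]
      nlinarith
    have h2 := norm_add_le x (R • y)
    have h3 := norm_sub_le (x + R • y) (R • y)
    rw [add_sub_cancel_right] at h3
    constructor <;> linarith
  have hmem : ∀ y ∈ ball (0 : EuclideanSpace ℝ (Fin N)) 1, x + R • y ∈ ball 0 1 \ {0} :=
    fun y hy => ⟨by simpa using (hnorm y hy).2, fun h => by
      have h1 := (hnorm y hy).1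
      rw [mem_singleton_iff.1 h, norm_zero] at h1
      linarith⟩
  have hscale := (hu.isNondivSolution hp.le hG).rescale x hc hR hmem
  have hl : (fun P : EuclideanSpace ℝ (Fin N) =>
      b⁻¹ * R ^ 2 * ‖(b⁻¹ * R)⁻¹ • P‖ ^ (q - p + 2)) =
      fun P => b ^ (q + 1 - p) * R ^ (p - q) * ‖P‖ ^ (q - p + 2) := by
    funext P
    rw [norm_smul, Real.norm_of_nonneg (by positivity), Real.mul_rpow (by positivity)
      (norm_nonneg P), mul_inv, inv_inv, Real.mul_rpow hb.le (by positivity),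
      Real.inv_rpow hR.le, ← Real.rpow_neg hR.le, ← mul_assoc]
    congr 1
    calc b⁻¹ * R ^ 2 * (b ^ (q - p + 2) * R ^ (-(q - p + 2)))
        = (b ^ (-1 : ℝ) * b ^ (q - p + 2)) * (R ^ (2 : ℝ) * R ^ (-(q - p + 2))) := by
          rw [Real.rpow_neg_one, Real.rpow_two]
          ring
      _ = _ := by
        rw [← Real.rpow_add hb, ← Real.rpow_add hR]
        congr 2 <;> ring
  rw [hl] at hscale
  have hcont : ContinuousOn (fun y => (b⁻¹ * R) • gradient u (x + R • y)) (ball 0 1) :=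
    ((hu.continuousOn_gradient hG).comp (by fun_prop) hmem).const_smul (b⁻¹ * R)
  obtain ⟨hbound, hholder⟩ := hloc _ _ (fun y => (b⁻¹ * R) • gradient u (x + R • y))
    (by positivity) hbΛ hscale
    (fun y hy => (hu.hasGradientAt hG (hmem y hy)).comp_affine b⁻¹)
    hcont
    (fun y hy => by
      rw [abs_mul, abs_of_pos hc, inv_mul_le_iff₀ hb, mul_one]
      exact hub _ (hnorm y hy).1 (hnorm y hy).2)
  have hbR : 0 < b⁻¹ * R := by positivity
  simp only [smul_zero, add_zero, ← smul_sub, norm_smul, Real.norm_of_nonneg hbR.le] at hbound hholder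
  have hinv : ∀ t B : ℝ, b⁻¹ * R * t ≤ C * B → t ≤ 2 * C * b * ‖x‖⁻¹ * B := by
    intro t B h
    calc t = b * R⁻¹ * (b⁻¹ * R * t) := by field_simp
      _ ≤ b * R⁻¹ * (C * B) := by gcongr
      _ = _ := by rw [hRdef]; field_simp
  have hpos : 0 < C * b * ‖x‖⁻¹ := by positivity
  refine ⟨?_, fun x' hx' => ?_⟩
  · have h1 := hbound 0 (by simp)
    rw [smul_zero, add_zero] at h1
    have h2 := hinv _ 1 (h1.trans (mul_one C).ge)
    linarith
  · have hy : ‖R⁻¹ • (x' - x)‖ = 2 * (‖x' - x‖ / ‖x‖) := by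
      rw [norm_smul, norm_inv, Real.norm_of_nonneg hR.le, hRdef]
      field_simp
    have h1 := hholder (R⁻¹ • (x' - x)) (by
      rw [hy]
      have : ‖x' - x‖ / ‖x‖ < 1 / 4 := by
        rw [div_lt_iff₀ hx]
        linarith
      linarith)
    rw [smul_smul, mul_inv_cancel₀ hR.ne', one_smul, add_sub_cancel, hy,
      Real.mul_rpow zero_le_two (by positivity)] at h1
    have h2 : (2 : ℝ) ^ α ≤ 2 := by
      calc (2 : ℝ) ^ α ≤ 2 ^ (1 : ℝ) := Real.rpow_le_rpow_of_exponent_le one_le_two hα.2.le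
        _ = 2 := Real.rpow_one 2
    calc _ ≤ 2 * C * b * ‖x‖⁻¹ * (2 ^ α * (‖x' - x‖ / ‖x‖) ^ α) := hinv _ _ h1
      _ ≤ 2 * C * b * ‖x‖⁻¹ * (2 * (‖x' - x‖ / ‖x‖) ^ α) := by gcongr
      _ = _ := by ring

end Scaling

/-- Weighted gradient and Hölder estimates near an isolated singularity. -/
theorem gradient_holder_estimate (N : ℕ) (hN : 2 ≤ N) (p q : ℝ) (hp1 : 1 < p) (hpN : p ≤ N)
    (hq1 : p - 1 < q) (hq2 : q < (N : ℝ) * (p - 1) / ((N : ℝ) - 1))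
    (a c₀ : ℝ) (ha : 0 < a) (hc₀ : 0 < c₀) :
    ∃ C : ℝ, 0 < C ∧ ∃ α ∈ Set.Ioo (0 : ℝ) 1,
      ∀ φ : ℝ → ℝ, ContinuousOn φ (Set.Ioc 0 1) → AntitoneOn φ (Set.Ioc 0 1) →
        (∀ r ∈ Set.Ioc (0 : ℝ) 1, 0 < φ r) →
        (∀ r : ℝ, 0 < r → r ≤ 1 / 2 → φ r ≤ a * φ (2 * r)) →
        (∀ r ∈ Set.Ioc (0 : ℝ) 1, r ^ ((p - q) / (q + 1 - p)) * φ r ≤ c₀) →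
        ∀ u : EuclideanSpace ℝ (Fin N) → ℝ,
          IsStrongSolution p q (Metric.ball (0 : EuclideanSpace ℝ (Fin N)) 1 \ {0}) u →
          (∀ x : EuclideanSpace ℝ (Fin N), 0 < ‖x‖ → ‖x‖ < 1 → |u x| ≤ φ ‖x‖) →
          (∀ x : EuclideanSpace ℝ (Fin N), 0 < ‖x‖ → ‖x‖ ≤ 1 / 2 →
            ‖gradient u x‖ ≤ C * φ ‖x‖ * ‖x‖⁻¹) ∧
          (∀ x x' : EuclideanSpace ℝ (Fin N), 0 < ‖x‖ → ‖x‖ ≤ ‖x'‖ → ‖x'‖ ≤ 1 / 2 →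
            ‖gradient u x - gradient u x'‖ ≤ C * φ ‖x‖ * ‖x‖ ^ (-(1 + α)) * ‖x - x'‖ ^ α) := by
  have hN1 : (0 : ℝ) < (N : ℝ) - 1 := by
    have : (2 : ℝ) ≤ N := by exact_mod_cast hN
    linarith
  have hqp : q < p := by
    refine hq2.trans_le ?_
    rw [div_le_iff₀ hN1]
    linarith
  have hs1 : 0 < q + 1 - p := by linarith
  obtain ⟨C, hC, α, hα, hest⟩ := exists_scaled_gradient_estimate N (q := q) hp1
    ⟨by linarith, by linarith⟩ (show 0 ≤ (a * c₀) ^ (q + 1 - p) by positivity)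
  refine ⟨8 * (C * a), by positivity, α, hα, ?_⟩
  intro φ _ hanti hpos hdouble hgrowth u hu hbd
  have hmain : ∀ x : EuclideanSpace ℝ (Fin N), 0 < ‖x‖ → ‖x‖ ≤ 1 / 2 →
      ‖gradient u x‖ ≤ C * (a * φ ‖x‖) * ‖x‖⁻¹ ∧ ∀ x', ‖x' - x‖ < ‖x‖ / 4 →
        ‖gradient u x' - gradient u x‖ ≤
          C * (a * φ ‖x‖) * ‖x‖⁻¹ * (‖x' - x‖ / ‖x‖) ^ α := by
    intro x hx hx2
    have hxm : ‖x‖ ∈ Set.Ioc (0 : ℝ) 1 := ⟨hx, by linarith⟩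
    have hφ := hpos _ hxm
    refine hest u hu x _ hx hx2 (mul_pos ha hφ) (fun z hz1 hz2 => ?_) ?_
    · have h1 := hdouble (‖x‖ / 2) (by positivity) (by linarith)
      rw [mul_div_cancel₀ _ two_ne_zero] at h1
      have hz0 : 0 < ‖z‖ := by linarith
      exact (hbd z hz0 hz2).trans ((hanti ⟨by positivity, by linarith⟩ ⟨hz0, hz2.le⟩ hz1.le).trans h1)
    · have h1 : (‖x‖ / 2) ^ (p - q) = ((‖x‖ / 2) ^ ((p - q) / (q + 1 - p))) ^ (q + 1 - p) := by
        rw [← Real.rpow_mul (by positivity), div_mul_cancel₀ _ hs1.ne']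
      rw [h1, ← Real.mul_rpow (by positivity) (by positivity)]
      refine Real.rpow_le_rpow (by positivity) ?_ hs1.le
      have h2 : (‖x‖ / 2) ^ ((p - q) / (q + 1 - p)) ≤ ‖x‖ ^ ((p - q) / (q + 1 - p)) :=
        Real.rpow_le_rpow (by positivity) (by linarith) (div_nonneg (by linarith) hs1.le)
      calc a * φ ‖x‖ * (‖x‖ / 2) ^ ((p - q) / (q + 1 - p))
          ≤ a * φ ‖x‖ * ‖x‖ ^ ((p - q) / (q + 1 - p)) := by gcongr
        _ = a * (‖x‖ ^ ((p - q) / (q + 1 - p)) * φ ‖x‖) := by ring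
        _ ≤ a * c₀ := by gcongr; exact hgrowth _ hxm
  refine ⟨fun x hx hx2 => ?_, fun x x' hx hxx' hx' => ?_⟩
  · have hφ := hpos ‖x‖ ⟨hx, by linarith⟩
    have h1 := (hmain x hx hx2).1
    have h2 : 0 < C * (a * φ ‖x‖) * ‖x‖⁻¹ := by positivity
    linarith
  · have hx2 : ‖x‖ ≤ 1 / 2 := hxx'.trans hx'
    have hx'0 : 0 < ‖x'‖ := hx.trans_le hxx'
    have hφ := hpos ‖x‖ ⟨hx, by linarith⟩
    have hφ' := hpos ‖x'‖ ⟨hx'0, by linarith⟩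
    have hφle : φ ‖x'‖ ≤ φ ‖x‖ := hanti ⟨hx, by linarith⟩ ⟨hx'0, by linarith⟩ hxx'
    have hK : 0 < C * (a * φ ‖x‖) * ‖x‖⁻¹ := by positivity
    rw [norm_sub_rev x x', norm_sub_rev (gradient u x)]
    have hgoal : 8 * (C * a) * φ ‖x‖ * ‖x‖ ^ (-(1 + α)) * ‖x' - x‖ ^ α =
        8 * (C * (a * φ ‖x‖) * ‖x‖⁻¹ * (‖x' - x‖ / ‖x‖) ^ α) := by
      rw [Real.div_rpow (norm_nonneg _) hx.le, neg_add, Real.rpow_add hx, Real.rpow_neg_one,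
        Real.rpow_neg hx.le α]
      ring
    rw [hgoal]
    rcases lt_or_ge ‖x' - x‖ (‖x‖ / 4) with h | h
    · have h1 := (hmain x hx hx2).2 x' h
      have h2 : 0 ≤ C * (a * φ ‖x‖) * ‖x‖⁻¹ * (‖x' - x‖ / ‖x‖) ^ α := by positivity
      linarith
    · have h1 := (hmain x hx hx2).1
      have h2 : ‖gradient u x'‖ ≤ C * (a * φ ‖x‖) * ‖x‖⁻¹ := by
        refine (hmain x' hx'0 hx').1.trans ?_
        gcongr
      have h3 : (1 / 4 : ℝ) ≤ (‖x' - x‖ / ‖x‖) ^ α := by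
        calc (1 / 4 : ℝ) = (1 / 4) ^ (1 : ℝ) := (Real.rpow_one _).symm
          _ ≤ (1 / 4) ^ α :=
            Real.rpow_le_rpow_of_exponent_ge (by norm_num) (by norm_num) hα.2.le
          _ ≤ _ := by
            refine Real.rpow_le_rpow (by norm_num) ?_ hα.1.le
            rw [le_div_iff₀ hx]
            linarith
      have h4 := norm_sub_le (gradient u x') (gradient u x)
      nlinarith [mul_le_mul_of_nonneg_left h3 hK.le]
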